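/- arXiv:math/9811058 — 2 statements merged into one kernel-verified Lean document; each statement's English description precedes it below -/
import Mathlib

section
/- Let n be a natural number and p a prime with p ≥ n. Let 𝓔 be a transversal for the isomorphism classes of groups of order p^n and exponent p (i.e. a finite family of groups of order p^n and exponent p containing exactly one representative of each isomorphism class). For each E ∈ 𝓔 let N_E be the set of group endomorphisms σ : E → E such that the image of σ is contained in the center Z(E) and the n-fold composite σ^n is the trivial endomorphism (sending all of E to the identity). The automorphism group Aut(E) acts on N_E by conjugation. Then the number of isomorphism classes of groups of order p^n whose derived subgroup has exponent dividing p equals the rational number ∑_{E ∈ 𝓔} ∑_{φ ∈ N_E} 1/|φ^{Aut(E)}|, where φ^{Aut(E)} denotes the Aut(E)-orbit of φ under conjugation. -/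
open scoped commutatorElement

/-- Bundled groups `P` of order `p ^ n` in which `⁅x, y⁆ ^ p = 1` for all `x, y`,
i.e. the derived subgroup has exponent dividing `p`. -/
def GoodGroup (p n : ℕ) : Type 1 :=
  { q : Σ G : Type, Group G //
      letI := q.2
      Nat.card q.1 = p ^ n ∧ ∀ x y : q.1, ⁅x, y⁆ ^ p = 1 }

/-- Group isomorphism between two bundled groups. -/
def groupIsoRel (p n : ℕ) (q₁ q₂ : GoodGroup p n) : Prop :=
  letI := q₁.1.2; letI := q₂.1.2
  Nonempty (q₁.1.1 ≃* q₂.1.1)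

/-- For a group `E`, the set `N_E` of endomorphisms `σ` with image inside the centre and
with `σ ^ n` the trivial endomorphism. -/
def NSet (n : ℕ) (E : Type*) [Group E] : Set (E →* E) :=
  {σ | (∀ x : E, σ x ∈ Subgroup.center E) ∧ ∀ x : E, (⇑σ)^[n] x = 1}

/-- The orbit `φ^{Aut(E)}` of an endomorphism `φ` under the conjugation action of `Aut(E)`. -/
def autOrbit (E : Type*) [Group E] (φ : E →* E) : Set (E →* E) :=
  {τ | ∃ α : E ≃* E, ∀ x : E, τ x = α (φ (α.symm x))}

/-!
If `P` has order `p ^ n` with `n ≤ p` and `⁅P, P⁆` has exponent dividing `p`, then a Taylor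
expansion of the polynomial sequence `i ↦ x ^ i * y ^ i` along the lower central series shows that
`π : x ↦ x ^ p` is an endomorphism, and it is central and nilpotent.  Thus `(P, π)` satisfies the
relation `x ^ p = π x`, and the pairs `(E, φ)` on the right-hand side satisfy `x ^ p = 1`: these are
the cases `ε = 1` and `ε = 0` of `x ^ p = π x ^ ε`.

Let `R_ε` be `ℤ[X] / (p - ε X)`, that is `ℤ` or `𝔽_p[X]`.  Since `X` is a prime of this principal
ideal domain, the range of `π`, on which `π` acts as `X`, is the reduction modulo `p - ε X` of a
lattice `F = ⨁ i, ℤ[X] / (X ^ k i)`.  The fibre product `Q` of `P` and `F` over that range has a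
central endomorphism lifting `π` and no longer depends on `ε`: the pair `(P, π)` is the quotient of
`Q` by the relations `z ^ p = endo z ^ ε`, and imposing the relations for the other value of `ε`
instead gives the corresponding pair of the other kind, of the same order.  An isomorphism between
two quotients for one value of `ε` lifts to a homomorphism of the extensions, which induces an
isomorphism for the other value; so isomorphism classes correspond.

Counting the pairs `(E, φ)` up to isomorphism, each with weight one over the size of its class,
gives the sum.
-/

/-- A filtration of a group in the sense of Host, Kra and Green–Tao: `F i` decreases with `i` and
`⁅F i, F j⁆ ≤ F (i + j)`.  Polynomial sequences take their coefficients in it. -/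
structure CommFiltration (G : Type*) [Group G] where
  F : ℕ → Subgroup G
  antitone : Antitone F
  commutator_mem : ∀ {i j : ℕ} {x y : G}, x ∈ F i → y ∈ F j → ⁅x, y⁆ ∈ F (i + j)

namespace CommFiltration

universe u

variable {G : Type u} [Group G] {A : CommFiltration G}

theorem conj_mem {i : ℕ} {x g : G} (hx : x ∈ A.F i) (hg : g ∈ A.F 0) : g * x * g⁻¹ ∈ A.F i := by
  have hgx : ⁅g, x⁆ ∈ A.F i := by simpa only [zero_add] using A.commutator_mem hg hx
  simpa only [commutatorElement_def, inv_mul_cancel_right] using mul_mem hgx hx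

theorem conj_mem' {i : ℕ} {x g : G} (hx : x ∈ A.F i) (hg : g ∈ A.F 0) : g⁻¹ * x * g ∈ A.F i := by
  simpa only [inv_inv] using conj_mem hx (inv_mem hg)

variable (A) in
/-- The Host–Kra square: the filtration on `G × G` whose `i`-th term consists of the pairs in `F i`
that agree modulo `F (i + 1)`. -/
def square : CommFiltration (G × G) where
  F i :=
    { carrier := {x | x.1 ∈ A.F i ∧ x.2 ∈ A.F i ∧ x.1⁻¹ * x.2 ∈ A.F (i + 1)}
      mul_mem' := by
        rintro ⟨a, a'⟩ ⟨b, b'⟩ ⟨ha, ha', haa'⟩ ⟨hb, hb', hbb'⟩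
        refine ⟨mul_mem ha hb, mul_mem ha' hb', ?_⟩
        have key : (a * b)⁻¹ * (a' * b') = (b⁻¹ * (a⁻¹ * a') * b) * (b⁻¹ * b') := by group
        simp only [Prod.mk_mul_mk, key]
        exact mul_mem (conj_mem' haa' (A.antitone i.zero_le hb)) hbb'
      one_mem' := by simp [one_mem]
      inv_mem' := by
        rintro ⟨a, a'⟩ ⟨ha, ha', haa'⟩
        refine ⟨inv_mem ha, inv_mem ha', ?_⟩
        have key : a⁻¹⁻¹ * a'⁻¹ = a * (a⁻¹ * a')⁻¹ * a⁻¹ := by group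
        simp only [Prod.inv_mk, key]
        exact conj_mem (inv_mem haa') (A.antitone i.zero_le ha) }
  antitone _ _ hij _ hx :=
    ⟨A.antitone hij hx.1, A.antitone hij hx.2.1, A.antitone (by lia) hx.2.2⟩
  commutator_mem := by
    rintro i j ⟨a, a'⟩ ⟨b, b'⟩ ⟨ha, ha', haa'⟩ ⟨hb, hb', hbb'⟩
    refine ⟨A.commutator_mem ha hb, A.commutator_mem ha' hb', ?_⟩
    have key : ⁅a, b⁆⁻¹ * ⁅a', b'⁆ = (⁅a, b⁆⁻¹ * (a * ⁅a⁻¹ * a', b'⁆ * a⁻¹) * ⁅a, b⁆) *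
        (b * ⁅a, b⁻¹ * b'⁆ * b⁻¹) := by
      simp only [commutatorElement_def]; group
    have hleft : ⁅a⁻¹ * a', b'⁆ ∈ A.F (i + j + 1) := by
      simpa only [add_right_comm] using A.commutator_mem haa' hb'
    have hright : ⁅a, b⁻¹ * b'⁆ ∈ A.F (i + j + 1) := A.commutator_mem (i := i) ha hbb'
    have mem_zero {k : ℕ} {x : G} (hx : x ∈ A.F k) : x ∈ A.F 0 := A.antitone k.zero_le hx
    have hab : ⁅a, b⁆ ∈ A.F (i + j) := A.commutator_mem ha hb
    change ⁅a, b⁆⁻¹ * ⁅a', b'⁆ ∈ _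
    rw [key]
    exact mul_mem (conj_mem' (conj_mem hleft (mem_zero ha)) (mem_zero hab))
      (conj_mem hright (mem_zero hb))

/-- Polynomial sequences up to order `k`: a sequence `g` in `F 0` such that `n ↦ (g n, g (n + 1))`
is polynomial up to order `k - 1` for the Host–Kra square. -/
def IsPoly : (k : ℕ) → {G : Type u} → [Group G] → CommFiltration G → (ℕ → G) → Prop
  | 0, _, _, A, g => ∀ n, g n ∈ A.F 0
  | k + 1, _, _, A, g => IsPoly k A.square fun n ↦ (g n, g (n + 1))

theorem IsPoly.mul {k : ℕ} {g h : ℕ → G} (hg : IsPoly k A g) (hh : IsPoly k A h) :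
    IsPoly k A fun n ↦ g n * h n := by
  induction k generalizing G with
  | zero => exact fun n ↦ mul_mem (hg n) (hh n)
  | succ k ih => exact ih hg hh

theorem IsPoly.inv {k : ℕ} {g : ℕ → G} (hg : IsPoly k A g) : IsPoly k A fun n ↦ (g n)⁻¹ := by
  induction k generalizing G with
  | zero => exact fun n ↦ inv_mem (hg n)
  | succ k ih => exact ih hg

theorem isPoly_pow_choose (k : ℕ) {i : ℕ} {v : G} (hv : v ∈ A.F i) :
    IsPoly k A fun n ↦ v ^ n.choose i := by
  induction k generalizing G i with
  | zero => exact fun n ↦ pow_mem (A.antitone i.zero_le hv) _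
  | succ k ih =>
    change IsPoly k A.square _
    have hdiag : (v, v) ∈ A.square.F i := ⟨hv, hv, by simp [one_mem]⟩
    cases i with
    | zero => simpa using ih hdiag
    | succ i =>
      have hedge : (1, v) ∈ A.square.F i := ⟨one_mem _, A.antitone i.le_succ hv, by simpa using hv⟩
      convert (ih hdiag).mul (ih hedge) using 2 with n
      simp [Nat.choose_succ_succ, ← pow_add, add_comm]

theorem IsPoly.of_succ {k : ℕ} {g : ℕ → G} (hg : IsPoly (k + 1) A g) : IsPoly k A g := by
  induction k generalizing G with
  | zero => exact fun n ↦ (hg n).1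
  | succ k ih => exact ih (g := fun n ↦ (g n, g (n + 1))) hg

theorem IsPoly.mono {k l : ℕ} (hkl : k ≤ l) {g : ℕ → G} (hg : IsPoly l A g) : IsPoly k A g := by
  induction l, hkl using Nat.le_induction with
  | base => exact hg
  | succ l _ ih => exact ih hg.of_succ

theorem IsPoly.apply_mem {k : ℕ} {g : ℕ → G} (hg : IsPoly k A g) (hg1 : ∀ i < k, g i = 1) :
    g k ∈ A.F k := by
  induction k generalizing G with
  | zero => exact hg 0
  | succ k ih =>
    have hpair : (g k, g (k + 1)) ∈ A.square.F k :=
      ih hg fun i hi ↦ by simp [hg1 i (by lia), hg1 (i + 1) (by lia)]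
    simpa [hg1 k k.lt_succ_self] using hpair.2.2

/-- Passing from `r` to `n ↦ (r m ^ n.choose m)⁻¹ * r n` removes the first Taylor coefficient `r m`
and, as `p` divides `p.choose m`, keeps the value at `p`. -/
theorem IsPoly.exists_eq_one_of_le_order {p : ℕ} (hp : p.Prime) {g : ℕ → G} (hg : IsPoly p A g)
    (hg1 : ∀ i < 2, g i = 1) (hexp : ∀ x ∈ A.F 2, x ^ p = 1) {m : ℕ} (hm : 2 ≤ m) (hmp : m ≤ p) :
    ∃ r : ℕ → G, IsPoly p A r ∧ (∀ i < m, r i = 1) ∧ r p = g p := by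
  induction m, hm using Nat.le_induction with
  | base => exact ⟨g, hg, hg1, rfl⟩
  | succ m hm ih =>
    obtain ⟨r, hr, hr1, hrp⟩ := ih (by lia)
    have hrm : r m ∈ A.F m := (hr.mono (by lia)).apply_mem hr1
    refine ⟨fun n ↦ (r m ^ n.choose m)⁻¹ * r n, (isPoly_pow_choose p hrm).inv.mul hr, ?_, ?_⟩
    · intro i hi
      obtain h | rfl := Nat.lt_succ_iff_lt_or_eq.mp hi
      · simp [hr1 i h, Nat.choose_eq_zero_of_lt h]
      · simp
    · obtain ⟨c, hc⟩ : p ∣ p.choose m := hp.dvd_choose_self (by lia) (by lia)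
      simp [hc, pow_mul, hexp _ (A.antitone hm hrm), hrp]

theorem IsPoly.apply_prime {p : ℕ} (hp : p.Prime) {g : ℕ → G} (hg : IsPoly p A g) (h0 : g 0 = 1)
    (hbot : A.F p = ⊥) (hexp : ∀ x ∈ A.F 2, x ^ p = 1) : g p = g 1 ^ p := by
  have h1 : g 1 ∈ A.F 1 := (hg.mono hp.one_le).apply_mem (by simpa using h0)
  obtain ⟨r, hr, hr1, hrp⟩ := ((isPoly_pow_choose p h1).inv.mul hg).exists_eq_one_of_le_order hp
    (fun i hi ↦ by interval_cases i <;> simp [h0]) hexp hp.two_le le_rfl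
  have : r p = 1 := by simpa [hbot] using hr.apply_mem hr1
  exact (inv_mul_eq_one.mp (by simpa [hrp] using this)).symm

/-- Hall's formula `(x * y) ^ p = x ^ p * y ^ p * ⋯`, read off from the Taylor expansion of the
polynomial sequence `n ↦ x ^ n * y ^ n`. -/
theorem mul_pow_prime {p : ℕ} (hp : p.Prime) (h1 : A.F 1 = ⊤) (hbot : A.F p = ⊥)
    (hexp : ∀ x ∈ A.F 2, x ^ p = 1) (x y : G) : (x * y) ^ p = x ^ p * y ^ p := by
  have hpoly (z : G) : IsPoly p A fun n ↦ z ^ n := by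
    simpa using isPoly_pow_choose p (A := A) (i := 1) (v := z) (by simp [h1])
  simpa using ((hpoly x).mul (hpoly y)).apply_prime hp (by simp) hbot hexp |>.symm

end CommFiltration

section LowerCentralFiltration

variable {G : Type*} [Group G]

theorem commutator_commutator_le_of_rotate {H₁ H₂ H₃ N : Subgroup G} [N.Normal]
    (h₁ : ⁅⁅H₂, H₃⁆, H₁⁆ ≤ N) (h₂ : ⁅⁅H₃, H₁⁆, H₂⁆ ≤ N) : ⁅⁅H₁, H₂⁆, H₃⁆ ≤ N := by
  have le_iff (K : Subgroup G) : K ≤ N ↔ K.map (QuotientGroup.mk' N) = ⊥ := by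
    rw [Subgroup.map_eq_bot_iff, QuotientGroup.ker_mk']
  rw [le_iff] at h₁ h₂ ⊢
  simp only [Subgroup.map_commutator] at h₁ h₂ ⊢
  exact Subgroup.commutator_commutator_eq_bot_of_rotate h₁ h₂

theorem commutator_lowerCentralSeries_le (i j : ℕ) :
    ⁅(⊤ : Subgroup G).lowerCentralSeries i, (⊤ : Subgroup G).lowerCentralSeries j⁆ ≤
      (⊤ : Subgroup G).lowerCentralSeries (i + j + 1) := by
  induction j generalizing i with
  | zero => rw [Subgroup.lowerCentralSeries_succ]; rfl
  | succ j ih =>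
    rw [Subgroup.commutator_comm, Subgroup.lowerCentralSeries_succ _ j]
    apply commutator_commutator_le_of_rotate
    · rw [Subgroup.commutator_comm ⊤, ← Subgroup.lowerCentralSeries_succ]
      simpa only [add_assoc, add_comm, add_left_comm] using ih (i + 1)
    · rw [← add_assoc, Subgroup.lowerCentralSeries_succ _ (i + j + 1)]
      exact Subgroup.commutator_mono (ih i) le_rfl

variable (G) in
/-- The lower central series as a filtration, indexed so that `F 0 = F 1 = ⊤` and `F 2` is the
derived subgroup. -/
def lowerCentralFiltration : CommFiltration G where
  F i := (⊤ : Subgroup G).lowerCentralSeries (i - 1)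
  antitone _ _ hij := Subgroup.lowerCentralSeries_antitone _ (Nat.sub_le_sub_right hij 1)
  commutator_mem {i j _ _} hx hy :=
    Subgroup.lowerCentralSeries_antitone _ (show i + j - 1 ≤ i - 1 + (j - 1) + 1 by lia)
      (commutator_lowerCentralSeries_le _ _ (Subgroup.commutator_mem_commutator hx hy))

end LowerCentralFiltration

theorem pow_eq_one_of_mem_commutator {G : Type*} [Group G] {p : ℕ}
    (hpow : ∀ x y : commutator G, (x * y) ^ p = x ^ p * y ^ p)
    (hcomm : ∀ x y : G, ⁅x, y⁆ ^ p = 1) {x : G} (hx : x ∈ commutator G) : x ^ p = 1 := by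
  have hx' : x ∈ Subgroup.closure (commutatorSet G) := by rwa [← commutator_eq_closure]
  induction hx' using Subgroup.closure_induction with
  | mem x h => obtain ⟨a, b, rfl⟩ := h; exact hcomm a b
  | one => exact one_pow p
  | mul a b ha hb iha ihb =>
    rw [← commutator_eq_closure] at ha hb
    have hab : (a * b) ^ p = a ^ p * b ^ p := congrArg Subtype.val (hpow ⟨a, ha⟩ ⟨b, hb⟩)
    rw [hab, iha ha, ihb hb, one_mul]
  | inv a ha iha =>
    rw [← commutator_eq_closure] at ha
    rw [inv_pow, iha ha, inv_one]

section PrimePower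

variable {p m : ℕ} [Fact p.Prime]

theorem finite_of_card_eq_prime_pow {G : Type*} (hG : Nat.card G = p ^ m) : Finite G :=
  Nat.finite_of_card_ne_zero (hG ▸ NeZero.ne (p ^ m))

theorem nontrivial_of_card_eq_prime_pow {G : Type*} (hG : Nat.card G = p ^ m) (hm : m ≠ 0) :
    Nontrivial G :=
  have := finite_of_card_eq_prime_pow hG
  Finite.one_lt_card_iff_nontrivial.mp (hG ▸ Nat.one_lt_pow hm (Fact.out : p.Prime).one_lt)

theorem exists_card_eq_prime_pow_lt {G H : Type*} (hG : Nat.card G = p ^ m)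
    (hdvd : Nat.card H ∣ Nat.card G) (hne : Nat.card H ≠ Nat.card G) :
    ∃ l < m, Nat.card H = p ^ l := by
  obtain ⟨l, hlm, hl⟩ := (Nat.dvd_prime_pow Fact.out).mp (hG ▸ hdvd)
  exact ⟨l, hlm.lt_of_ne (by rintro rfl; exact hne (hl.trans hG.symm)), hl⟩

variable {G : Type*} [Group G]

theorem isCyclic_of_card_eq_prime_pow (hG : Nat.card G = p ^ m) (hm : m ≤ 1) : IsCyclic G :=
  isCyclic_of_card_dvd_prime (p := p) (hG ▸ by simpa using pow_dvd_pow p hm)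

theorem nilpotencyClass_le_of_card_eq_prime_pow (hG : Nat.card G = p ^ m) (hm : 2 ≤ m) :
    Group.nilpotencyClass G ≤ m - 1 := by
  induction m using Nat.strong_induction_on generalizing G with
  | _ m ih =>
    have := finite_of_card_eq_prime_pow hG
    have := nontrivial_of_card_eq_prime_pow hG (by lia)
    have := (IsPGroup.of_card hG).isNilpotent
    have hcard := Subgroup.card_eq_card_quotient_mul_card_subgroup (Subgroup.center G)
    have hcenter : 1 < Nat.card (Subgroup.center G) :=
      have := (IsPGroup.of_card hG).center_nontrivial
      Finite.one_lt_card
    obtain ⟨l, hlm, hl⟩ := exists_card_eq_prime_pow_lt (H := G ⧸ Subgroup.center G) hG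
      ⟨_, hcard⟩ (hcard ▸ (lt_mul_of_one_lt_right Nat.card_pos hcenter).ne)
    obtain hl2 | hl2 := le_or_gt 2 l
    · have := ih l hlm hl hl2
      rw [Group.nilpotencyClass_quotient_center] at this
      lia
    · have := isCyclic_of_card_eq_prime_pow hl (by lia)
      have hcomm := MonoidHom.isMulCommutative_of_isCyclic_of_ker_le_center
        (QuotientGroup.mk' (Subgroup.center G)) (by simp)
      have := Group.IsNilpotent.nilpotencyClass_le_one_iff.mpr hcomm
      lia

theorem mul_pow_of_card_eq_prime_pow (hG : Nat.card G = p ^ m) (hmp : m ≤ p)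
    (hcomm : ∀ x y : G, ⁅x, y⁆ ^ p = 1) (x y : G) : (x * y) ^ p = x ^ p * y ^ p := by
  induction m using Nat.strong_induction_on generalizing G with
  | _ m ih =>
    obtain hm | hm := lt_or_ge m 2
    · have := isCyclic_of_card_eq_prime_pow hG (by lia)
      let := IsCyclic.commGroup (α := G)
      exact mul_pow x y p
    have := finite_of_card_eq_prime_pow hG
    have := nontrivial_of_card_eq_prime_pow hG (by lia)
    have := (IsPGroup.of_card hG).isNilpotent
    have hlt : commutator G < ⊤ := Group.IsSolvable.commutator_lt_top_of_nontrivial G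
    obtain ⟨l, hlm, hl⟩ := exists_card_eq_prime_pow_lt hG (commutator G).card_subgroup_dvd_card
      fun h ↦ hlt.ne (Subgroup.eq_top_of_card_eq _ h)
    have hbot : (⊤ : Subgroup G).lowerCentralSeries (p - 1) = ⊥ := by
      have := nilpotencyClass_le_of_card_eq_prime_pow hG hm
      exact Subgroup.lowerCentralSeries_eq_bot_iff_nilpotencyClass_le.mpr (by lia)
    refine CommFiltration.mul_pow_prime (A := lowerCentralFiltration G) Fact.out rfl hbot
      (fun x hx ↦ pow_eq_one_of_mem_commutator (ih l hlm hl (by lia) fun x y ↦ ?_) hcomm ?_) x y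
    · exact Subtype.ext (hcomm x y)
    · exact Subgroup.top_lowerCentralSeries_one (G := G) ▸ hx

end PrimePower

open Polynomial

section ConstantTerm

theorem X_pow_dvd_of_dvd_mul {u a : ℤ[X]} (hu : u.coeff 0 ≠ 0) {e : ℕ}
    (h : X ^ e ∣ u * a) : X ^ e ∣ a :=
  prime_X.pow_dvd_of_dvd_mul_left e (by rwa [X_dvd_iff]) h

variable {F : Type*} [AddCommGroup F] [Module ℤ[X] F]

theorem smul_mem_of_X_smul_mem {T : AddSubgroup F} (hT : ∀ c ∈ T, (X : ℤ[X]) • c ∈ T)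
    (a : ℤ[X]) {c : F} (hc : c ∈ T) : a • c ∈ T := by
  have hpow (i : ℕ) : (X : ℤ[X]) ^ i • c ∈ T := by
    induction i with
    | zero => simpa using hc
    | succ i ih => simpa only [pow_succ', mul_smul] using hT _ ih
  rw [a.as_sum_range_C_mul_X_pow, Finset.sum_smul]
  refine sum_mem fun i _ ↦ ?_
  rw [mul_smul, eq_intCast, Int.cast_smul_eq_zsmul]
  exact zsmul_mem (hpow i) _

/-- If `X` acts nilpotently, then `u` acts with the single eigenvalue `u.coeff 0`. -/
theorem card_quotient_range_lsmul [Module.Free ℤ F] [Module.Finite ℤ F] {N : ℕ}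
    (hN : ∀ c : F, (X : ℤ[X]) ^ N • c = 0) {u : ℤ[X]}
    (hu : Function.Injective fun c : F ↦ u • c) :
    Nat.card (F ⧸ LinearMap.range (LinearMap.lsmul ℤ[X] F u)) =
      (u.coeff 0).natAbs ^ Module.finrank ℤ F := by
  let L : ℤ[X] →+* Module.End ℤ F := Module.toModuleEnd ℤ F
  have hnil : (L (-(X * u.divX))).charpoly = X ^ Module.finrank ℤ F := by
    refine (LinearMap.charpoly_eq_X_pow_iff _).mpr fun c ↦ ⟨N, ?_⟩
    rw [← map_pow, ← mul_neg, mul_pow, mul_comm]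
    exact (mul_smul _ _ c).trans (by rw [hN, smul_zero])
  have hdet : LinearMap.det (L u) = u.coeff 0 ^ Module.finrank ℤ F := by
    have hLu : L u = algebraMap ℤ (Module.End ℤ F) (u.coeff 0) - L (-(X * u.divX)) := by
      nth_rw 1 [← X_mul_divX_add u]
      rw [map_add, map_neg, sub_neg_eq_add, add_comm, eq_intCast, map_intCast, eq_intCast]
    rw [hLu, ← LinearMap.eval_charpoly, hnil, eval_pow, eval_X]
  let e : F ≃ₗ[ℤ] (LinearMap.range (LinearMap.lsmul ℤ[X] F u)).restrictScalars ℤ :=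
    (LinearEquiv.ofInjective (LinearMap.lsmul ℤ[X] F u) hu).restrictScalars ℤ
  rw [← Int.natAbs_pow, ← hdet]
  exact (Submodule.natAbs_det_equiv _ e).symm

theorem smul_injective_of_coeff_zero_ne_zero [Module.IsTorsionFree ℤ F] {N : ℕ}
    (hN : ∀ c : F, (X : ℤ[X]) ^ N • c = 0) {u : ℤ[X]} (hu : u.coeff 0 ≠ 0) :
    Function.Injective fun c : F ↦ u • c := by
  refine (injective_iff_map_eq_zero (LinearMap.lsmul ℤ[X] F u)).mpr fun c (hc : u • c = 0) ↦ ?_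
  suffices ∀ e, (X : ℤ[X]) ^ e • c = 0 → c = 0 from this N (hN c)
  intro e he
  induction e with
  | zero => simpa using he
  | succ e ih =>
    refine ih ((smul_eq_zero_iff_right hu).mp ?_)
    calc u.coeff 0 • (X : ℤ[X]) ^ e • c
        = (X ^ e * (X * u.divX + C (u.coeff 0))) • c - u.divX • X ^ (e + 1) • c := by
          rw [← Int.cast_smul_eq_zsmul ℤ[X], ← eq_intCast C, ← mul_smul, ← mul_smul, ← sub_smul]
          congr 1
          ring
      _ = 0 := by rw [X_mul_divX_add, mul_smul, hc, he, smul_zero, smul_zero, sub_zero]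

end ConstantTerm

/-- The `ℤ[X]`-module `⨁ i, ℤ[X] / (X ^ k i)`: a free abelian group with a nilpotent endomorphism
`X` that has one Jordan block of size `k i` for each `i`. -/
abbrev JordanLattice {ι : Type*} (k : ι → ℕ) : Type _ :=
  ∀ i, ℤ[X] ⧸ Ideal.span {(X : ℤ[X]) ^ k i}

namespace JordanLattice

variable {ι : Type*} {k : ι → ℕ}

instance [Finite ι] : Module.Free ℤ (JordanLattice k) :=
  have (i : ι) : Module.Free ℤ (ℤ[X] ⧸ Ideal.span {(X : ℤ[X]) ^ k i}) :=
    (monic_X_pow (k i)).free_quotient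
  inferInstance

instance [Finite ι] : Module.Finite ℤ (JordanLattice k) :=
  have (i : ι) : Module.Finite ℤ (ℤ[X] ⧸ Ideal.span {(X : ℤ[X]) ^ k i}) :=
    (monic_X_pow (k i)).finite_quotient
  inferInstance

theorem exists_X_pow_smul_eq_zero [Finite ι] (k : ι → ℕ) :
    ∃ N, ∀ c : JordanLattice k, (X : ℤ[X]) ^ N • c = 0 := by
  obtain ⟨N, hN⟩ := Finite.bddAbove_range k
  refine ⟨N, fun c ↦ funext fun i ↦ ?_⟩
  obtain ⟨a, ha⟩ := Ideal.Quotient.mk_surjective (c i)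
  rw [Pi.smul_apply, ← ha, Pi.zero_apply]
  exact Ideal.Quotient.eq_zero_iff_mem.mpr (Ideal.mem_span_singleton.mpr
    (Dvd.dvd.mul_right (pow_dvd_pow X (hN ⟨i, rfl⟩)) a))

theorem exists_eq_X_pow_smul {u : ℤ[X]} (hu : u.coeff 0 ≠ 0) {e : ℕ} {c d : JordanLattice k}
    (h : u • c = (X : ℤ[X]) ^ e • d) : ∃ m : JordanLattice k, c = (X : ℤ[X]) ^ e • m := by
  suffices ∀ i, ∃ m : ℤ[X] ⧸ Ideal.span {(X : ℤ[X]) ^ k i}, c i = (X : ℤ[X]) ^ e • m by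
    choose m hm using this
    exact ⟨m, funext hm⟩
  intro i
  obtain ⟨a, ha⟩ := Ideal.Quotient.mk_surjective (c i)
  obtain ⟨b, hb⟩ := Ideal.Quotient.mk_surjective (d i)
  have hab : X ^ k i ∣ u * a - X ^ e * b := by
    rw [← Ideal.mem_span_singleton, ← Ideal.Quotient.mk_eq_mk_iff_sub_mem]
    have hi := congrFun h i
    rw [Pi.smul_apply, Pi.smul_apply, ← ha, ← hb] at hi
    exact hi
  rw [← ha]
  obtain hke | hek := le_total (k i) e
  · refine ⟨0, ?_⟩
    rw [smul_zero, Ideal.Quotient.eq_zero_iff_mem, Ideal.mem_span_singleton]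
    exact X_pow_dvd_of_dvd_mul hu
      ((dvd_sub_left ((pow_dvd_pow X hke).mul_right b)).mp hab)
  · obtain ⟨m, rfl⟩ := X_pow_dvd_of_dvd_mul hu
      ((dvd_sub_left (Dvd.intro b rfl)).mp ((pow_dvd_pow X hek).trans hab))
    exact ⟨Ideal.Quotient.mk _ m, rfl⟩

theorem X_pow_smul_single [DecidableEq ι] (i : ι) :
    (X : ℤ[X]) ^ k i • (Pi.single i 1 : JordanLattice k) = 0 := by
  rw [← Pi.single_smul, Pi.single_eq_zero_iff]
  exact Ideal.Quotient.eq_zero_iff_mem.mpr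
    (Ideal.mem_span_singleton.mpr (Dvd.intro 1 rfl))

variable [Finite ι] [DecidableEq ι]

theorem eq_top_of_single_mem {T : AddSubgroup (JordanLattice k)}
    (hX : ∀ c ∈ T, (X : ℤ[X]) • c ∈ T) (hT : ∀ i, Pi.single i 1 ∈ T) : T = ⊤ := by
  cases nonempty_fintype ι
  refine (AddSubgroup.eq_top_iff' T).mpr fun c ↦ ?_
  rw [← Finset.univ_sum_single c]
  refine sum_mem fun i _ ↦ ?_
  obtain ⟨a, ha⟩ := Ideal.Quotient.mk_surjective (c i)
  have : Pi.single i (c i) = a • (Pi.single i 1 : JordanLattice k) := by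
    rw [← Pi.single_smul, ← ha]
    exact congrArg (Pi.single i) (congrArg (Ideal.Quotient.mk _) (mul_one a)).symm
  rw [this]
  exact smul_mem_of_X_smul_mem hX a (hT i)

theorem exists_linearMap_single {Y : Type*} [AddCommGroup Y] [Module ℤ[X] Y] {y : ι → Y}
    (hy : ∀ i, (X : ℤ[X]) ^ k i • y i = 0) :
    ∃ f : JordanLattice k →ₗ[ℤ[X]] Y, ∀ i, f (Pi.single i 1) = y i := by
  cases nonempty_fintype ι
  have hker (i : ι) :
      Ideal.span {X ^ k i} ≤ LinearMap.ker (LinearMap.toSpanSingleton ℤ[X] Y (y i)) := by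
    rw [Ideal.span_singleton_le_iff_mem]
    exact hy i
  refine ⟨LinearMap.lsum ℤ[X] _ ℤ[X] fun i ↦ Submodule.liftQ _ _ (hker i), fun i ↦ ?_⟩
  rw [LinearMap.lsum_piSingle]
  exact one_smul ℤ[X] (y i)

end JordanLattice

section PrincipalIdealDomain

theorem exists_block_surjective (u : ℤ[X]) (k : ℕ) :
    ∃ g : (ℤ[X] ⧸ Ideal.span {(X : ℤ[X]) ^ k}) →ₗ[ℤ[X]] ((ℤ[X] ⧸ Ideal.span {u}) ⧸
        Submodule.span (ℤ[X] ⧸ Ideal.span {u}) {Ideal.Quotient.mk (Ideal.span {u}) X ^ k}),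
      Function.Surjective g ∧ ∀ c, g c = 0 → ∃ m, c = u • m := by
  let R := ℤ[X] ⧸ Ideal.span {u}
  let ϖ : R := Ideal.Quotient.mk (Ideal.span {u}) X
  let f : ℤ[X] →ₗ[ℤ[X]] R ⧸ Submodule.span R {ϖ ^ k} :=
    ((Submodule.span R {ϖ ^ k}).mkQ.restrictScalars ℤ[X]) ∘ₗ Algebra.linearMap ℤ[X] R
  have hf (a : ℤ[X]) : f a = 0 ↔ ϖ ^ k ∣ Ideal.Quotient.mk (Ideal.span {u}) a :=
    (Submodule.Quotient.mk_eq_zero _).trans Ideal.mem_span_singleton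
  have hker : Ideal.span {(X : ℤ[X]) ^ k} ≤ LinearMap.ker f := by
    rw [Ideal.span_singleton_le_iff_mem, LinearMap.mem_ker, hf, map_pow]
  refine ⟨Submodule.liftQ _ f hker, ?_, fun c hc ↦ ?_⟩
  · rw [← LinearMap.range_eq_top, Submodule.range_liftQ, LinearMap.range_eq_top]
    exact (Submodule.mkQ_surjective _).comp Ideal.Quotient.mk_surjective
  · obtain ⟨a, rfl⟩ := Ideal.Quotient.mk_surjective c
    obtain ⟨r, hr⟩ := (hf a).mp hc
    obtain ⟨b, rfl⟩ := Ideal.Quotient.mk_surjective r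
    rw [← map_pow, ← map_mul, Ideal.Quotient.mk_eq_mk_iff_sub_mem,
      Ideal.mem_span_singleton] at hr
    obtain ⟨h, hh⟩ := hr
    refine ⟨Ideal.Quotient.mk _ h, Ideal.Quotient.mk_eq_mk_iff_sub_mem _ _ |>.mpr ?_⟩
    rw [Ideal.mem_span_singleton]
    exact ⟨b, show a - u * h = X ^ k * b by linear_combination hh⟩

theorem exists_jordanLattice_surjective {u : ℤ[X]} [IsDomain (ℤ[X] ⧸ Ideal.span {u})]
    [IsPrincipalIdealRing (ℤ[X] ⧸ Ideal.span {u})]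
    (hX : Irreducible (Ideal.Quotient.mk (Ideal.span {u}) X))
    {M : Type*} [AddCommGroup M] [Module ℤ[X] M] [Finite M] {N : ℕ}
    (hN : ∀ y : M, (X : ℤ[X]) ^ N • y = 0) (hu : Module.IsTorsionBy ℤ[X] M u) :
    ∃ (d : ℕ) (k : Fin d → ℕ) (f : JordanLattice k →ₗ[ℤ[X]] M), Function.Surjective f ∧
      ∀ c, f c = 0 → ∃ m, c = u • m := by
  let R := ℤ[X] ⧸ Ideal.span {u}
  let ϖ : R := Ideal.Quotient.mk (Ideal.span {u}) X
  let _ : Module R M := hu.module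
  have _ : IsScalarTower ℤ[X] R M := Module.IsTorsionBySet.isScalarTower _
  have htors : Module.IsTorsion' M (Submonoid.powers ϖ) := fun {y} ↦ ⟨⟨ϖ ^ N, N, rfl⟩, by
    have : ϖ ^ N • y = (X : ℤ[X]) ^ N • y := by rw [← Module.IsTorsionBy.mk_smul hu]; rfl
    exact this.trans (hN y)⟩
  obtain ⟨d, k, ⟨e⟩⟩ := Module.torsion_by_prime_power_decomposition hX htors
  choose g hg hker using fun i ↦ exists_block_surjective u (k i)
  let e' : M ≃ₗ[ℤ[X]] ∀ i, R ⧸ Submodule.span R {ϖ ^ k i} :=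
    (e.trans (DirectSum.linearEquivFunOnFintype R (Fin d) _)).restrictScalars ℤ[X]
  refine ⟨d, k, e'.symm.toLinearMap ∘ₗ LinearMap.piMap g,
    e'.symm.surjective.comp (Function.Surjective.piMap hg), fun c hc ↦ ?_⟩
  have hc' : LinearMap.piMap g c = 0 := e'.symm.map_eq_zero_iff.mp hc
  choose m hm using fun i ↦ hker i (c i) (congrFun hc' i)
  exact ⟨m, funext hm⟩

theorem exists_jordanLattice_surjective_of_ker_eq {S : Type*} [CommRing S] [IsDomain S]
    [IsPrincipalIdealRing S] {ρ : ℤ[X] →+* S} (hρ : Function.Surjective ρ) {u : ℤ[X]}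
    (hker : RingHom.ker ρ = Ideal.span {u}) (hX : Irreducible (ρ X))
    {M : Type*} [AddCommGroup M] [Module ℤ[X] M] [Finite M] {N : ℕ}
    (hN : ∀ y : M, (X : ℤ[X]) ^ N • y = 0) (hu : Module.IsTorsionBy ℤ[X] M u) :
    ∃ (d : ℕ) (k : Fin d → ℕ) (f : JordanLattice k →ₗ[ℤ[X]] M), Function.Surjective f ∧
      ∀ c, f c = 0 → ∃ m, c = u • m := by
  let e : (ℤ[X] ⧸ Ideal.span {u}) ≃+* S :=
    (Ideal.quotEquivOfEq hker.symm).trans (RingHom.quotientKerEquivOfSurjective hρ)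
  have := e.isDomain_iff.mpr ‹_›
  have := IsPrincipalIdealRing.of_surjective e.symm e.symm.surjective
  exact exists_jordanLattice_surjective ((MulEquiv.irreducible_iff e).mp hX) hN hu

/-- The polynomial whose annihilation expresses the relation `p • y = ε • φ y` for an endomorphism
`φ`, which acts as `X`: for `ε = 1` it makes `φ` multiplication by `p`, for `ε = 0` it imposes
exponent `p` and no condition on `φ`. -/
noncomputable def relatorPoly (p ε : ℕ) : ℤ[X] := C (p : ℤ) - C (ε : ℤ) * X

theorem relatorPoly_smul (p ε : ℕ) {F : Type*} [AddCommGroup F] [Module ℤ[X] F] (c : F) :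
    relatorPoly p ε • c = p • c - ε • (X : ℤ[X]) • c := by
  simp [relatorPoly, sub_smul, mul_smul, ← Nat.cast_smul_eq_nsmul ℤ[X]]

theorem relatorPoly_coeff_zero (p ε : ℕ) : (relatorPoly p ε).coeff 0 = p := by
  simp [relatorPoly]

theorem relatorPoly_coeff_zero_ne_zero {p : ℕ} [NeZero p] (ε : ℕ) :
    (relatorPoly p ε).coeff 0 ≠ 0 := by
  rw [relatorPoly_coeff_zero]
  exact_mod_cast NeZero.ne p

theorem exists_jordanLattice_surjective_of_relatorPoly {p : ℕ} [Fact p.Prime] {ε : ℕ} (hε : ε ≤ 1)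
    {M : Type*} [AddCommGroup M] [Module ℤ[X] M] [Finite M] {N : ℕ}
    (hN : ∀ y : M, (X : ℤ[X]) ^ N • y = 0) (hu : Module.IsTorsionBy ℤ[X] M (relatorPoly p ε)) :
    ∃ (d : ℕ) (k : Fin d → ℕ) (f : JordanLattice k →ₗ[ℤ[X]] M), Function.Surjective f ∧
      ∀ c, f c = 0 → ∃ m, c = relatorPoly p ε • m := by
  interval_cases ε
  · refine exists_jordanLattice_surjective_of_ker_eq (ρ := mapRingHom (Int.castRingHom (ZMod p)))
      (map_surjective _ (ZMod.ringHom_surjective _)) ?_ ?_ hN hu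
    · rw [ker_mapRingHom, ZMod.ker_intCastRingHom, Ideal.map_span, Set.image_singleton]
      simp [relatorPoly]
    · simpa using irreducible_X
  · refine exists_jordanLattice_surjective_of_ker_eq (ρ := evalRingHom (p : ℤ))
      (fun a ↦ ⟨C a, eval_C⟩) ?_ ?_ hN hu
    · rw [ker_evalRingHom, ← Ideal.span_singleton_neg]
      simp [relatorPoly]
    · simpa using (Nat.prime_iff_prime_int.mp Fact.out).irreducible

end PrincipalIdealDomain

theorem pow_mem_center_of_mul_pow {G : Type*} [Group G] {p : ℕ}
    (hmul : ∀ x y : G, (x * y) ^ p = x ^ p * y ^ p) (hcomm : ∀ x y : G, ⁅x, y⁆ ^ p = 1) (x : G) :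
    x ^ p ∈ Subgroup.center G := by
  refine Subgroup.mem_center_iff.mpr fun y ↦ ?_
  have hconj : y * x ^ p * y⁻¹ = x ^ p := by
    rw [← conj_pow, show y * x * y⁻¹ = ⁅y, x⁆ * x by simp [commutatorElement_def], hmul, hcomm,
      one_mul]
  exact mul_inv_eq_iff_eq_mul.mp hconj

/-- A central nilpotent endomorphism `π` of a group with `x ^ p = π x ^ ε`.  For `ε = 1` it is the
`p`-th power map, for `ε = 0` it is an arbitrary central nilpotent endomorphism of a group of
exponent dividing `p`. -/
structure IsPowEndo (p ε : ℕ) {P : Type*} [Group P] (π : P →* P) : Prop where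
  mem_center (x : P) : π x ∈ Subgroup.center P
  nilpotent : ∃ N, ∀ x, π^[N] x = 1
  pow_eq (x : P) : x ^ p = π x ^ ε

theorem IsPowEndo.mul_pow {p ε : ℕ} {P : Type*} [Group P] {π : P →* P} (h : IsPowEndo p ε π)
    (x y : P) : (x * y) ^ p = x ^ p * y ^ p := by
  simp only [h.pow_eq, map_mul]
  exact (show Commute (π x) (π y) from
    (Subgroup.mem_center_iff.mp (h.mem_center y) (π x))).mul_pow ε

/-- A group `Q` with a central endomorphism `endo` and an epimorphism `deg` onto a `ℤ[X]`-module
`F` on which `X` is nilpotent, such that `deg` turns `endo` into multiplication by `X`.  Imposing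
the relation `z ^ p = endo z ^ ε` on it gives back, for suitable `Q`, every group with an
endomorphism as in `IsPowEndo p ε`. -/
structure LatticeExtension (p : ℕ) (F : Type*) [AddCommGroup F] [Module ℤ[X] F]
    (Q : Type*) [Group Q] where
  endo : Q →* Q
  deg : Q →* Multiplicative F
  exists_X_pow_smul_eq_zero : ∃ N, ∀ c : F, (X : ℤ[X]) ^ N • c = 0
  endo_mem_center (z : Q) : endo z ∈ Subgroup.center Q
  mul_pow (z w : Q) : (z * w) ^ p = z ^ p * w ^ p
  deg_surjective : Function.Surjective deg
  toAdd_deg_endo (z : Q) : (deg (endo z)).toAdd = (X : ℤ[X]) • (deg z).toAdd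
  pow_eq_one {z : Q} (hz : deg z = 1) : z ^ p = 1
  endo_eq_one {z : Q} (hz : deg z = 1) : endo z = 1
  exists_deg_eq_pow {z : Q} (hz : endo z = 1) : ∃ w, deg (endo w) = 1 ∧ deg z = deg w ^ p

namespace LatticeExtension

universe u

variable {p ε : ℕ} {F : Type*} [AddCommGroup F] [Module ℤ[X] F] {Q : Type u}
  [Group Q] (L : LatticeExtension p F Q)

theorem pow_mem_center (L : LatticeExtension p F Q) (z : Q) : z ^ p ∈ Subgroup.center Q :=
  pow_mem_center_of_mul_pow L.mul_pow
    (fun x y ↦ L.pow_eq_one (by rw [map_commutatorElement, commutatorElement_eq_one_iff_mul_comm,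
      mul_comm])) z

theorem toAdd_deg_iterate_endo (e : ℕ) (z : Q) :
    (L.deg (L.endo^[e] z)).toAdd = (X : ℤ[X]) ^ e • (L.deg z).toAdd := by
  induction e generalizing z with
  | zero => simp
  | succ e ih => rw [Function.iterate_succ_apply, ih, L.toAdd_deg_endo, pow_succ, mul_smul]

variable (ε) in
/-- The homomorphism `z ↦ z ^ p / endo z ^ ε`, whose range is factored out to enforce
`z ^ p = endo z ^ ε`. -/
def relator : Q →* Q where
  toFun z := z ^ p * (L.endo z ^ ε)⁻¹
  map_one' := by simp
  map_mul' z w := by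
    have hcentral (x y : Q) : Commute (L.endo x) y :=
      (Subgroup.mem_center_iff.mp (L.endo_mem_center x) y).symm
    rw [L.mul_pow, map_mul, (hcentral z _).mul_pow,
      (((hcentral z _).pow_left ε).pow_right ε).mul_inv,
      ((hcentral z (w ^ p)).pow_left ε).symm.inv_right.mul_mul_mul_comm]

theorem relator_apply (z : Q) : L.relator ε z = z ^ p * (L.endo z ^ ε)⁻¹ := rfl

theorem relator_mem_center (z : Q) : L.relator ε z ∈ Subgroup.center Q :=
  mul_mem (L.pow_mem_center z) (inv_mem (pow_mem (L.endo_mem_center z) ε))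

theorem endo_relator (z : Q) : L.endo (L.relator ε z) = L.relator ε (L.endo z) := by
  simp [relator_apply]

theorem relator_eq_one {z : Q} (hz : L.deg z = 1) : L.relator ε z = 1 := by
  simp [relator_apply, L.pow_eq_one hz, L.endo_eq_one hz]

theorem toAdd_deg_relator (z : Q) :
    (L.deg (L.relator ε z)).toAdd = relatorPoly p ε • (L.deg z).toAdd := by
  rw [relator_apply, map_mul, map_inv, map_pow, map_pow, toAdd_mul, toAdd_inv, toAdd_pow, toAdd_pow,
    L.toAdd_deg_endo, relatorPoly_smul, sub_eq_add_neg]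

section Finite

variable [NeZero p] [Module.IsTorsionFree ℤ F]

theorem smul_relatorPoly_injective (L : LatticeExtension p F Q) :
    Function.Injective fun c : F ↦ relatorPoly p ε • c :=
  L.exists_X_pow_smul_eq_zero.elim fun _ hN ↦
    smul_injective_of_coeff_zero_ne_zero hN (relatorPoly_coeff_zero_ne_zero ε)

theorem deg_eq_one_of_deg_relator {z : Q} (hz : L.deg (L.relator ε z) = 1) : L.deg z = 1 := by
  have hsmul : relatorPoly p ε • (L.deg z).toAdd = relatorPoly p ε • 0 := by
    rw [← L.toAdd_deg_relator, hz, toAdd_one, smul_zero]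
  exact L.smul_relatorPoly_injective hsmul

end Finite

/-- `q : Q → P` exhibits `(P, π)` as the quotient of `(Q, endo)` by the relations
`z ^ p = endo z ^ ε`. -/
structure IsReduction (ε : ℕ) {P : Type*} [Group P] (π : P →* P) (q : Q →* P) : Prop where
  surjective : Function.Surjective q
  map_endo (z : Q) : q (L.endo z) = π (q z)
  eq_one_iff (z : Q) : q z = 1 ↔ ∃ w, L.relator ε w = z

variable (ε) in
theorem exists_isReduction :
    ∃ (P : Type u) (_ : Group P) (π : P →* P) (q : Q →* P), L.IsReduction ε π q := by
  have : (L.relator ε).range.Normal := by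
    refine ⟨?_⟩
    rintro _ ⟨w, rfl⟩ g
    rw [Subgroup.mem_center_iff.mp (L.relator_mem_center w) g, mul_inv_cancel_right]
    exact ⟨w, rfl⟩
  refine ⟨Q ⧸ (L.relator ε).range, inferInstance, QuotientGroup.map _ _ L.endo ?_,
    QuotientGroup.mk' _, QuotientGroup.mk'_surjective _, fun z ↦ rfl, fun z ↦ ?_⟩
  · rintro _ ⟨w, rfl⟩
    exact ⟨L.endo w, (L.endo_relator w).symm⟩
  · exact QuotientGroup.eq_one_iff z

namespace IsReduction

variable {L} {P : Type*} [Group P] {π : P →* P} {q : Q →* P}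

theorem map_iterate_endo (h : L.IsReduction ε π q) (e : ℕ) (z : Q) :
    q (L.endo^[e] z) = π^[e] (q z) :=
  Function.Semiconj.iterate_right (f := q) (ga := L.endo) h.map_endo e z

theorem map_relator (h : L.IsReduction ε π q) (z : Q) : q (L.relator ε z) = 1 :=
  (h.eq_one_iff _).mpr ⟨z, rfl⟩

theorem isPowEndo (h : L.IsReduction ε π q) : IsPowEndo p ε π where
  mem_center x := by
    obtain ⟨z, rfl⟩ := h.surjective x
    rw [← h.map_endo, Subgroup.mem_center_iff]
    refine h.surjective.forall.mpr fun w ↦ ?_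
    rw [← map_mul, ← map_mul, Subgroup.mem_center_iff.mp (L.endo_mem_center z)]
  nilpotent := by
    obtain ⟨N, hN⟩ := L.exists_X_pow_smul_eq_zero
    refine ⟨N + 1, h.surjective.forall.mpr fun z ↦ ?_⟩
    rw [← h.map_iterate_endo, Function.iterate_succ_apply', L.endo_eq_one, map_one]
    exact (L.toAdd_deg_iterate_endo N z).trans (hN _)
  pow_eq := h.surjective.forall.mpr fun z ↦ by
    rw [← mul_inv_eq_one, ← h.map_endo, ← map_pow, ← map_pow, ← map_inv, ← map_mul]
    exact h.map_relator z

variable [NeZero p] [Module.IsTorsionFree ℤ F]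

theorem eq_one_of_deg_eq_one (h : L.IsReduction ε π q) {z : Q} (hq : q z = 1) (hz : L.deg z = 1) :
    z = 1 := by
  obtain ⟨w, rfl⟩ := (h.eq_one_iff z).mp hq
  exact L.relator_eq_one (L.deg_eq_one_of_deg_relator hz)

theorem index_map_ker [Module.Free ℤ F] [Module.Finite ℤ F] (h : L.IsReduction ε π q) :
    (q.ker.map L.deg).index = p ^ Module.finrank ℤ F := by
  have hmap : q.ker.map L.deg = AddSubgroup.toSubgroup
      (LinearMap.range (LinearMap.lsmul ℤ[X] F (relatorPoly p ε))).toAddSubgroup := by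
    ext c
    constructor
    · rintro ⟨z, hz, rfl⟩
      obtain ⟨w, rfl⟩ := (h.eq_one_iff z).mp hz
      exact ⟨(L.deg w).toAdd, (L.toAdd_deg_relator w).symm⟩
    · rintro ⟨d, hd⟩
      obtain ⟨w, hw⟩ := L.deg_surjective (.ofAdd d)
      refine ⟨L.relator ε w, h.map_relator w, (L.toAdd_deg_relator w).trans ?_⟩
      rw [hw]
      exact hd
  obtain ⟨N, hN⟩ := L.exists_X_pow_smul_eq_zero
  rw [hmap, AddSubgroup.index_toSubgroup]
  refine (card_quotient_range_lsmul hN (L.smul_relatorPoly_injective (ε := ε))).trans ?_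
  rw [relatorPoly_coeff_zero, Int.natAbs_natCast]

theorem card_eq [Module.Free ℤ F] [Module.Finite ℤ F] (h : L.IsReduction ε π q) :
    Nat.card P = Nat.card L.deg.ker * p ^ Module.finrank ℤ F := by
  have hdisj : q.ker ⊓ L.deg.ker = ⊥ :=
    (Subgroup.eq_bot_iff_forall _).mpr fun z hz ↦ h.eq_one_of_deg_eq_one hz.1 hz.2
  have hsup : (q.ker ⊔ L.deg.ker).index = p ^ Module.finrank ℤ F := by
    rw [← h.index_map_ker, Subgroup.index_map, MonoidHom.range_eq_top.mpr L.deg_surjective,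
      Subgroup.index_top, mul_one]
  calc Nat.card P = q.ker.index := by
        rw [Subgroup.index_ker, MonoidHom.range_eq_top.mpr h.surjective, Subgroup.card_top]
    _ = q.ker.relIndex (q.ker ⊔ L.deg.ker) * (q.ker ⊔ L.deg.ker).index :=
        (Subgroup.relIndex_mul_index le_sup_left).symm
    _ = Nat.card L.deg.ker * p ^ Module.finrank ℤ F := by
        rw [hsup, Subgroup.relIndex_sup_left, ← Subgroup.inf_relIndex_right, hdisj,
          Subgroup.relIndex_bot_left]

/-- An element of `π.ker` lifts to degree one: first correct a lift by relators so that `endo`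
kills it, then its degree is a `p`-th power of a degree that `endo` kills, hence is the degree of a
relator. -/
theorem exists_deg_eq_one {ι : Type*} [Finite ι] {k : ι → ℕ}
    {L : LatticeExtension p (JordanLattice k) Q} (h : L.IsReduction ε π q) {x : P} (hx : π x = 1) :
    ∃ z, L.deg z = 1 ∧ q z = x := by
  have hu : (relatorPoly p ε).coeff 0 ≠ 0 := relatorPoly_coeff_zero_ne_zero ε
  obtain ⟨w, rfl⟩ := h.surjective x
  obtain ⟨s, hs⟩ := (h.eq_one_iff _).mp ((h.map_endo w).trans hx)
  obtain ⟨m, hm⟩ : ∃ m, (L.deg s).toAdd = (X : ℤ[X]) ^ 1 • m := by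
    refine JordanLattice.exists_eq_X_pow_smul (d := (L.deg w).toAdd) hu ?_
    rw [← L.toAdd_deg_relator, hs, L.toAdd_deg_endo, pow_one]
  obtain ⟨t, ht⟩ := L.deg_surjective (.ofAdd m)
  have hw : L.endo (w * (L.relator ε t)⁻¹) = 1 := by
    have hst : L.deg (s * (L.endo t)⁻¹) = 1 := by
      rw [map_mul, map_inv, mul_inv_eq_one]
      refine Multiplicative.toAdd.injective ?_
      rw [hm, L.toAdd_deg_endo, ht, toAdd_ofAdd, pow_one]
    rw [map_mul, map_inv, L.endo_relator, ← hs, ← map_inv, ← map_mul]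
    exact L.relator_eq_one hst
  obtain ⟨v, hv, hwv⟩ := L.exists_deg_eq_pow hw
  refine ⟨w * (L.relator ε t)⁻¹ * (L.relator ε v)⁻¹, ?_, ?_⟩
  · rw [map_mul, hwv, map_inv, mul_inv_eq_one, relator_apply, map_mul, map_pow, map_inv, map_pow,
      hv, one_pow, inv_one, mul_one]
  · rw [map_mul, map_mul, map_inv, map_inv, h.map_relator, h.map_relator, inv_one, mul_one, mul_one]

end IsReduction

end LatticeExtension

/-- Two groups with endomorphism are isomorphic. -/
def EndoIso {P P' : Type*} [Group P] [Group P'] (π : P →* P) (π' : P' →* P') : Prop :=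
  ∃ e : P ≃* P', ∀ x, e (π x) = π' (e x)

theorem EndoIso.symm {P P' : Type*} [Group P] [Group P'] {π : P →* P} {π' : P' →* P'}
    (h : EndoIso π π') : EndoIso π' π :=
  h.elim fun e he ↦ ⟨e.symm, fun x ↦ e.injective (by simp [he])⟩

theorem injective_of_semiconj_of_nilpotent {P P' : Type*} [Group P] [Group P'] {π : P →* P}
    {π' : P' →* P'} (hπ : ∃ N, ∀ x, π^[N] x = 1) (f : P →* P') (hf : ∀ x, f (π x) = π' (f x))
    (hker : ∀ x, π x = 1 → f x = 1 → x = 1) : Function.Injective f := by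
  obtain ⟨N, hN⟩ := hπ
  refine (injective_iff_map_eq_one f).mpr fun x hx ↦ ?_
  suffices ∀ j, π^[j] x = 1 → x = 1 from this N (hN x)
  intro j hj
  induction j with
  | zero => exact hj
  | succ j ih =>
    refine ih (hker _ (by rwa [← Function.iterate_succ_apply' π]) ?_)
    rw [Function.Semiconj.iterate_right (f := f) hf j x, hx, iterate_map_one]

namespace LatticeExtension.IsReduction

variable {p ε ε' : ℕ} [NeZero p]
  {ι ι₁ : Type*} [Finite ι₁] {k : ι → ℕ} {k₁ : ι₁ → ℕ}
  {Q Q₁ P P' P₁' : Type*} [Group Q] [Group Q₁] [Group P] [Group P'] [Group P₁']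
  {L : LatticeExtension p (JordanLattice k) Q} {L₁ : LatticeExtension p (JordanLattice k₁) Q₁}
  {π : P →* P} {q : Q →* P} {q₁ : Q₁ →* P}
  {π' : P' →* P'} {π₁' : P₁' →* P₁'} {q' : Q →* P'} {q₁' : Q₁ →* P₁'}

theorem exists_X_pow_smul_deg_eq_zero (h : L.IsReduction ε π q) (h₁ : L₁.IsReduction ε π q₁)
    {e : ℕ} {z : Q} (hz : (X : ℤ[X]) ^ e • (L.deg z).toAdd = 0) :
    ∃ w, q₁ w = q z ∧ (X : ℤ[X]) ^ e • (L₁.deg w).toAdd = 0 := by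
  obtain ⟨v, hv⟩ := h₁.surjective (q z)
  have hπ : π (π^[e] (q z)) = 1 := by
    rw [← h.map_iterate_endo, ← h.map_endo, L.endo_eq_one, map_one]
    exact (L.toAdd_deg_iterate_endo e z).trans hz
  obtain ⟨t, ht, hqt⟩ := h₁.exists_deg_eq_one hπ
  obtain ⟨s, hs⟩ := (h₁.eq_one_iff (L₁.endo^[e] v * t⁻¹)).mp <| by
    rw [map_mul, map_inv, hqt, h₁.map_iterate_endo, hv, mul_inv_cancel]
  have hsv : relatorPoly p ε • (L₁.deg s).toAdd = (X : ℤ[X]) ^ e • (L₁.deg v).toAdd := by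
    rw [← L₁.toAdd_deg_relator, hs, map_mul, map_inv, ht, inv_one, mul_one,
      L₁.toAdd_deg_iterate_endo]
  obtain ⟨m, hm⟩ := JordanLattice.exists_eq_X_pow_smul (relatorPoly_coeff_zero_ne_zero ε) hsv
  obtain ⟨r, hr⟩ := L₁.deg_surjective (.ofAdd m)
  refine ⟨v * (L₁.relator ε r)⁻¹, ?_, ?_⟩
  · rw [map_mul, map_inv, h₁.map_relator, inv_one, mul_one, hv]
  · rw [map_mul, map_inv, toAdd_mul, toAdd_inv, L₁.toAdd_deg_relator, hr, toAdd_ofAdd, smul_add,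
      smul_neg, smul_comm, ← hm, hsv, add_neg_cancel]

variable [Finite ι]

theorem eq_of_deg_eq (h : L.IsReduction ε π q) {z w : Q} (hq : q z = q w) (hd : L.deg z = L.deg w) :
    z = w := by
  rw [← mul_inv_eq_one] at hq hd ⊢
  rw [← map_inv, ← map_mul] at hq hd
  exact h.eq_one_of_deg_eq_one hq hd

theorem exists_linearMap (h : L.IsReduction ε π q) (h₁ : L₁.IsReduction ε π q₁) :
    ∃ θ : JordanLattice k →ₗ[ℤ[X]] JordanLattice k₁,
      ∀ z, ∃ w, q₁ w = q z ∧ (L₁.deg w).toAdd = θ (L.deg z).toAdd := by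
  classical
  choose z hz using fun i ↦ L.deg_surjective (.ofAdd (Pi.single i 1))
  have hzX (i : ι) : (X : ℤ[X]) ^ k i • (L.deg (z i)).toAdd = 0 := by
    rw [hz]
    exact JordanLattice.X_pow_smul_single i
  choose w hw hwX using fun i ↦ h.exists_X_pow_smul_deg_eq_zero h₁ (hzX i)
  obtain ⟨θ, hθ⟩ := JordanLattice.exists_linearMap_single
    (y := fun i ↦ (L₁.deg (w i)).toAdd) hwX
  let T : AddSubgroup (JordanLattice k) :=
    { carrier := {c | ∃ z w, q₁ w = q z ∧ (L.deg z).toAdd = c ∧ (L₁.deg w).toAdd = θ c}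
      zero_mem' := ⟨1, 1, by simp⟩
      add_mem' := by
        rintro _ _ ⟨z, w, hq, rfl, hw⟩ ⟨z', w', hq', rfl, hw'⟩
        exact ⟨z * z', w * w', by simp [*]⟩
      neg_mem' := by
        rintro _ ⟨z, w, hq, rfl, hw⟩
        exact ⟨z⁻¹, w⁻¹, by simp [*]⟩ }
  have hT : T = ⊤ := by
    refine JordanLattice.eq_top_of_single_mem ?_ fun i ↦ ⟨z i, w i, hw i, ?_, ?_⟩
    · rintro _ ⟨z, w, hq, rfl, hw⟩
      exact ⟨L.endo z, L₁.endo w, by rw [h.map_endo, h₁.map_endo, hq], L.toAdd_deg_endo z,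
        by rw [L₁.toAdd_deg_endo, hw, map_smul]⟩
    · rw [hz, toAdd_ofAdd]
    · rw [hθ]
  refine ⟨θ, fun z ↦ ?_⟩
  obtain ⟨z', w', hq, hdeg, hw'⟩ : (L.deg z).toAdd ∈ T := hT ▸ AddSubgroup.mem_top _
  have hker : π (q (z * z'⁻¹)) = 1 := by
    rw [← h.map_endo, L.endo_eq_one, map_one]
    rw [map_mul, map_inv, mul_inv_eq_one]
    exact hdeg.symm
  obtain ⟨t, ht, hqt⟩ := h₁.exists_deg_eq_one hker
  exact ⟨t * w', by rw [map_mul, hqt, hq, ← map_mul, inv_mul_cancel_right],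
    by rw [map_mul, ht, one_mul, hw']⟩

theorem exists_monoidHom (h : L.IsReduction ε π q) (h₁ : L₁.IsReduction ε π q₁) :
    ∃ Θ : Q →* Q₁, (∀ z, Θ (L.endo z) = L₁.endo (Θ z)) ∧ (∀ z, q₁ (Θ z) = q z) ∧
      ∀ z, L.deg z = 1 → L₁.deg (Θ z) = 1 := by
  obtain ⟨θ, hθ⟩ := h.exists_linearMap h₁
  choose f hq hdeg using hθ
  refine ⟨.mk' f fun z w ↦ h₁.eq_of_deg_eq ?_ ?_, fun z ↦ h₁.eq_of_deg_eq ?_ ?_, hq, fun z hz ↦ ?_⟩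
  · simp only [map_mul, hq]
  · refine Multiplicative.toAdd.injective ?_
    simp only [map_mul, toAdd_mul, hdeg, map_add]
  · simp only [MonoidHom.mk'_apply, hq, h.map_endo, h₁.map_endo]
  · refine Multiplicative.toAdd.injective ?_
    simp only [MonoidHom.mk'_apply, hdeg, L.toAdd_deg_endo, L₁.toAdd_deg_endo, map_smul]
  · refine Multiplicative.toAdd.injective ?_
    simp only [MonoidHom.mk'_apply, hdeg, hz, toAdd_one, map_zero]

theorem endoIso [Finite P] (h : L.IsReduction ε π q) (h₁ : L₁.IsReduction ε π q₁)
    (h' : L.IsReduction ε' π' q') (h₁' : L₁.IsReduction ε' π₁' q₁') : EndoIso π' π₁' := by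
  obtain ⟨Θ, hendo, hq, hdeg⟩ := h.exists_monoidHom h₁
  have hΘrel (z : Q) : Θ (L.relator ε' z) = L₁.relator ε' (Θ z) := by
    simp only [relator_apply, map_mul, map_pow, map_inv, hendo]
  have hker : q'.ker ≤ (q₁'.comp Θ).ker := fun z hz ↦ by
    obtain ⟨w, rfl⟩ := (h'.eq_one_iff z).mp hz
    exact (congrArg q₁' (hΘrel w)).trans (h₁'.map_relator _)
  let f : P' →* P₁' := q'.liftOfSurjective h'.surjective ⟨q₁'.comp Θ, hker⟩
  have hf (z : Q) : f (q' z) = q₁' (Θ z) :=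
    MonoidHom.liftOfRightInverse_comp_apply _ _ _ ⟨q₁'.comp Θ, hker⟩ z
  have hequiv (x : P') : f (π' x) = π₁' (f x) := by
    obtain ⟨z, rfl⟩ := h'.surjective x
    rw [← h'.map_endo, hf, hf, hendo, h₁'.map_endo]
  have hinj : Function.Injective f := by
    refine injective_of_semiconj_of_nilpotent h'.isPowEndo.nilpotent f hequiv fun x hπx hfx ↦ ?_
    obtain ⟨z, hz, rfl⟩ := h'.exists_deg_eq_one hπx
    have hΘz : Θ z = 1 := h₁'.eq_one_of_deg_eq_one ((hf z).symm.trans hfx) (hdeg z hz)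
    rw [h.eq_one_of_deg_eq_one (by rw [← hq, hΘz, map_one]) hz, map_one]
  have hcard' : Nat.card P' = Nat.card P := h'.card_eq.trans h.card_eq.symm
  have hcard₁' : Nat.card P₁' = Nat.card P := h₁'.card_eq.trans h₁.card_eq.symm
  have : Finite P₁' := Nat.finite_of_card_ne_zero (hcard₁'.trans_ne Nat.card_pos.ne')
  have hbij : Function.Bijective f :=
    (Nat.bijective_iff_injective_and_card f).mpr ⟨hinj, hcard'.trans hcard₁'.symm⟩
  exact ⟨.ofBijective f hbij, hequiv⟩

end LatticeExtension.IsReduction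

section Resolution

universe u

variable {p ε : ℕ} {F : Type*} [AddCommGroup F] [Module ℤ[X] F]

/-- `B : F → P` is an epimorphism onto `π.range` turning multiplication by `X` into `π`, with kernel
generated by the multiples of `relatorPoly p ε`. -/
structure IsResolution (p ε : ℕ) {P : Type*} [Group P] (π : P →* P) (B : Multiplicative F →* P) :
    Prop where
  range_eq : B.range = π.range
  map_X_smul (c : F) : B (.ofAdd ((X : ℤ[X]) • c)) = π (B (.ofAdd c))
  exists_eq_smul {c : F} (hc : B (.ofAdd c) = 1) : ∃ m, c = relatorPoly p ε • m

theorem exists_isResolution_of_commGroup [Fact p.Prime] (hε : ε ≤ 1) {A : Type*} [CommGroup A]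
    [Finite A] {τ : A →* A} (hτ : IsPowEndo p ε τ) :
    ∃ (d : ℕ) (k : Fin d → ℕ) (B : Multiplicative (JordanLattice k) →* A), Function.Surjective B ∧
      (∀ c : JordanLattice k, B (.ofAdd ((X : ℤ[X]) • c)) = τ (B (.ofAdd c))) ∧
      ∀ c : JordanLattice k, B (.ofAdd c) = 1 → ∃ m, c = relatorPoly p ε • m := by
  let φ : Additive A →ₗ[ℤ] Additive A := τ.toAdditive.toIntLinearMap
  let o := Module.AEval'.of φ
  have : Finite (Module.AEval' φ) := Finite.of_equiv _ o.toEquiv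
  obtain ⟨N, hN⟩ := hτ.nilpotent
  have hnil : ∀ y : Module.AEval' φ, (X : ℤ[X]) ^ N • y = 0 := by
    refine o.surjective.forall.mpr fun a ↦ ?_
    have hφ : (φ ^ N) a = 0 := (Module.End.pow_apply φ N a).trans (hN a.toMul)
    rw [Module.AEval'.X_pow_smul_of, Module.End.smul_def, hφ, map_zero]
  have htors : Module.IsTorsionBy ℤ[X] (Module.AEval' φ) (relatorPoly p ε) := by
    refine o.surjective.forall.mpr fun a ↦ ?_
    have ha : p • a = ε • φ a := hτ.pow_eq a.toMul
    rw [relatorPoly_smul, Module.AEval'.X_smul_of, ← map_nsmul, ← map_nsmul, ha, sub_self]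
  obtain ⟨d, k, f, hf, hker⟩ := exists_jordanLattice_surjective_of_relatorPoly hε hnil htors
  refine ⟨d, k, AddMonoidHom.toMultiplicativeLeft (o.symm.toAddMonoidHom.comp f.toAddMonoidHom),
    o.symm.surjective.comp hf, fun c ↦ ?_, fun c hc ↦ hker c (o.symm.map_eq_zero_iff.mp hc)⟩
  have hc : o.symm (f ((X : ℤ[X]) • c)) = φ (o.symm (f c)) := by
    rw [map_smul, Module.AEval'.of_symm_X_smul]
  exact congrArg Additive.toMul hc

theorem IsPowEndo.exists_isResolution [Fact p.Prime] {P : Type*} [Group P] [Finite P] (hε : ε ≤ 1)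
    {π : P →* P} (h : IsPowEndo p ε π) :
    ∃ (d : ℕ) (k : Fin d → ℕ) (B : Multiplicative (JordanLattice k) →* P),
      IsResolution p ε π B := by
  let : CommGroup π.range :=
    { (inferInstance : Group π.range) with
      mul_comm := by
        rintro ⟨_, x, rfl⟩ b
        exact Subtype.ext (Subgroup.mem_center_iff.mp (h.mem_center x) b).symm }
  let τ : π.range →* π.range := π.rangeRestrict.comp π.range.subtype
  have hiter (N : ℕ) (a : π.range) : ((τ^[N] a : π.range) : P) = π^[N] a :=
    Function.Semiconj.iterate_right (f := ((↑) : π.range → P)) (fun _ ↦ rfl) N a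
  have hτ : IsPowEndo p ε τ :=
    { mem_center := fun a ↦ Subgroup.mem_center_iff.mpr fun b ↦ mul_comm b _
      nilpotent := h.nilpotent.imp fun N hN a ↦ Subtype.ext ((hiter N a).trans (hN a))
      pow_eq := fun a ↦ Subtype.ext (h.pow_eq a) }
  obtain ⟨d, k, B, hB, hX, hker⟩ := exists_isResolution_of_commGroup hε hτ
  refine ⟨d, k, π.range.subtype.comp B, ?_, fun c ↦ congrArg Subtype.val (hX c),
    fun hc ↦ hker _ (Subtype.ext hc)⟩
  rw [MonoidHom.range_comp, MonoidHom.range_eq_top.mpr hB, ← MonoidHom.range_eq_map,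
    Subgroup.range_subtype]

section FibreProduct

variable {P : Type*} [Group P] {π : P →* P} {B : Multiplicative F →* P}

theorem IsResolution.exists_apply_eq (hB : IsResolution p ε π B) (c : Multiplicative F) :
    ∃ x, π x = B c :=
  MonoidHom.mem_range.mp (hB.range_eq ▸ ⟨c, rfl⟩)

variable [NeZero p] [Module.IsTorsionFree ℤ F]

theorem IsResolution.exists_eq_nsmul (hB : IsResolution p ε π B)
    (hF : ∃ N, ∀ c : F, (X : ℤ[X]) ^ N • c = 0) {c : F} (hc : B (.ofAdd c) = 1)
    (hX : (X : ℤ[X]) • c = 0) : ∃ m, c = p • m ∧ (X : ℤ[X]) • m = 0 := by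
  obtain ⟨N, hN⟩ := hF
  obtain ⟨m, rfl⟩ := hB.exists_eq_smul hc
  have hm : (X : ℤ[X]) • m = 0 := by
    refine smul_injective_of_coeff_zero_ne_zero hN (relatorPoly_coeff_zero_ne_zero (p := p) ε) ?_
    simpa only [smul_zero, smul_comm (relatorPoly p ε)] using hX
  exact ⟨m, by rw [relatorPoly_smul, hm, smul_zero, sub_zero], hm⟩

/-- The fibre product of `P` and `F` over `π.range`. -/
noncomputable def IsResolution.latticeExtension (hB : IsResolution p ε π B)
    (hπ : IsPowEndo p ε π) (hF : ∃ N, ∀ c : F, (X : ℤ[X]) ^ N • c = 0) :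
    LatticeExtension p F ((π.comp (.fst P (Multiplicative F))).eqLocus (B.comp (.snd _ _))) where
  endo := ((π.prodMap (DistribSMul.toAddMonoidHom F (X : ℤ[X])).toMultiplicative).comp
    (Subgroup.subtype _)).codRestrict _ fun z ↦
      (congrArg π z.2).trans (hB.map_X_smul _).symm
  deg := (MonoidHom.snd _ _).comp (Subgroup.subtype _)
  exists_X_pow_smul_eq_zero := hF
  endo_mem_center z := Subgroup.mem_center_iff.mpr fun w ↦ Subtype.ext <| Prod.ext
    (Subgroup.mem_center_iff.mp (hπ.mem_center z.1.1) w.1.1) (mul_comm _ _)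
  mul_pow z w := Subtype.ext <| Prod.ext (hπ.mul_pow z.1.1 w.1.1) (_root_.mul_pow _ _ p)
  deg_surjective c := (hB.exists_apply_eq c).elim fun x hx ↦ ⟨⟨(x, c), hx⟩, rfl⟩
  toAdd_deg_endo z := rfl
  pow_eq_one := by
    rintro ⟨⟨x, c⟩, hx⟩ (rfl : c = 1)
    have hx' : π x = 1 := hx.trans (map_one B)
    exact Subtype.ext <| Prod.ext (show x ^ p = 1 by rw [hπ.pow_eq, hx', one_pow]) (one_pow p)
  endo_eq_one := by
    rintro ⟨⟨x, c⟩, hx⟩ (rfl : c = 1)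
    exact Subtype.ext <| Prod.ext (hx.trans (map_one B)) (smul_zero (A := F) (X : ℤ[X]))
  exists_deg_eq_pow := by
    rintro ⟨⟨x, c⟩, hx⟩ hz
    have hx1 : π x = 1 := congrArg (fun w ↦ w.1.1) hz
    have hXc : (X : ℤ[X]) • c.toAdd = 0 := congrArg (fun w ↦ w.1.2) hz
    obtain ⟨m, hm, hXm⟩ := hB.exists_eq_nsmul hF (Eq.symm hx |>.trans hx1) hXc
    obtain ⟨y, hy⟩ := hB.exists_apply_eq (.ofAdd m)
    exact ⟨⟨(y, .ofAdd m), hy⟩, hXm, hm⟩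

theorem IsResolution.isReduction (hB : IsResolution p ε π B)
    (hπ : IsPowEndo p ε π) (hF : ∃ N, ∀ c : F, (X : ℤ[X]) ^ N • c = 0) :
    (hB.latticeExtension hπ hF).IsReduction ε π
      ((MonoidHom.fst _ _).comp (Subgroup.subtype _)) where
  surjective x := by
    obtain ⟨c, hc⟩ : π x ∈ B.range := hB.range_eq ▸ ⟨x, rfl⟩
    exact ⟨⟨(x, c), hc.symm⟩, rfl⟩
  map_endo z := rfl
  eq_one_iff := by
    have hrel (x : P) : x ^ p * (π x ^ ε)⁻¹ = 1 := mul_inv_eq_one.mpr (hπ.pow_eq x)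
    rintro ⟨⟨x, c⟩, hx⟩
    refine ⟨fun (hx1 : x = 1) ↦ ?_, ?_⟩
    · subst hx1
      obtain ⟨m, hm⟩ := hB.exists_eq_smul (hx.symm.trans (map_one π))
      obtain ⟨y, hy⟩ := hB.exists_apply_eq (.ofAdd m)
      refine ⟨⟨(y, .ofAdd m), hy⟩, Subtype.ext <| Prod.ext (hrel y) ?_⟩
      exact ((hB.latticeExtension hπ hF).toAdd_deg_relator _).trans hm.symm
    · rintro ⟨w, hw⟩
      exact (congrArg (fun w ↦ w.1.1) hw).symm.trans (hrel w.1.1)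

end FibreProduct

theorem IsPowEndo.exists_isReduction [Fact p.Prime] (hε : ε ≤ 1) {P : Type u} [Group P] [Finite P]
    {π : P →* P} (h : IsPowEndo p ε π) :
    ∃ (d : ℕ) (k : Fin d → ℕ) (Q : Type u) (_ : Group Q)
      (L : LatticeExtension p (JordanLattice k) Q) (q : Q →* P), L.IsReduction ε π q := by
  obtain ⟨d, k, B, hB⟩ := h.exists_isResolution hε
  exact ⟨d, k, _, _, _, _, hB.isReduction h (JordanLattice.exists_X_pow_smul_eq_zero k)⟩

end Resolution

section Linked

universe u

variable {p ε ε' : ℕ} {P P' P₁ P₁' : Type u} [Group P] [Group P'] [Group P₁] [Group P₁']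
  {π : P →* P} {π' : P' →* P'} {π₁ : P₁ →* P₁} {π₁' : P₁' →* P₁'}

/-- The relation between `(P, π)` and `(P', π')` of being the quotients of a common lattice
extension by the relations `z ^ p = endo z ^ ε` and `z ^ p = endo z ^ ε'`.  For `ε = 1` and `ε' = 0`
it is the correspondence between groups with a central `p`-th power map and groups of exponent
dividing `p` with a central nilpotent endomorphism. -/
def Linked (p ε ε' : ℕ) (π : P →* P) (π' : P' →* P') : Prop :=
  ∃ (d : ℕ) (k : Fin d → ℕ) (Q : Type u) (_ : Group Q) (L : LatticeExtension p (JordanLattice k) Q)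
    (q : Q →* P) (q' : Q →* P'), L.IsReduction ε π q ∧ L.IsReduction ε' π' q'

theorem Linked.symm (h : Linked p ε ε' π π') : Linked p ε' ε π' π := by
  obtain ⟨d, k, Q, _, L, q, q', hq, hq'⟩ := h
  exact ⟨d, k, Q, _, L, q', q, hq', hq⟩

theorem Linked.isPowEndo (h : Linked p ε ε' π π') : IsPowEndo p ε' π' := by
  obtain ⟨_, _, _, _, _, _, _, -, hq'⟩ := h
  exact hq'.isPowEndo

theorem Linked.trans_endoIso (h : Linked p ε ε' π π') (e : EndoIso π' π₁') :
    Linked p ε ε' π π₁' := by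
  obtain ⟨d, k, Q, _, L, q, q', hq, hq'⟩ := h
  obtain ⟨e, he⟩ := e
  exact ⟨d, k, Q, _, L, q, e.toMonoidHom.comp q', hq,
    { surjective := e.surjective.comp hq'.surjective
      map_endo := fun z ↦ (congrArg e (hq'.map_endo z)).trans (he _)
      eq_one_iff := fun z ↦ e.map_eq_one_iff.trans (hq'.eq_one_iff z) }⟩

theorem IsPowEndo.exists_linked [Fact p.Prime] [Finite P] (hε : ε ≤ 1) (ε' : ℕ)
    (h : IsPowEndo p ε π) :
    ∃ (P' : Type u) (_ : Group P') (π' : P' →* P'), Linked p ε ε' π π' := by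
  obtain ⟨d, k, Q, _, L, q, hq⟩ := h.exists_isReduction hε
  obtain ⟨P', _, π', q', hq'⟩ := L.exists_isReduction ε'
  exact ⟨P', _, π', d, k, Q, _, L, q, q', hq, hq'⟩

variable [NeZero p]

theorem Linked.card_eq (h : Linked p ε ε' π π') : Nat.card P' = Nat.card P := by
  obtain ⟨_, _, _, _, _, _, _, hq, hq'⟩ := h
  exact hq'.card_eq.trans hq.card_eq.symm

theorem Linked.endoIso [Finite P] (h : Linked p ε ε' π π') (h₁ : Linked p ε ε' π π₁') :
    EndoIso π' π₁' := by
  obtain ⟨_, _, _, _, _, _, _, hq, hq'⟩ := h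
  obtain ⟨_, _, _, _, _, _, _, hq₁, hq₁'⟩ := h₁
  exact hq.endoIso hq₁ hq' hq₁'

theorem Linked.endoIso_iff [Finite P₁] [Finite P₁'] (h : Linked p ε ε' π π')
    (h₁ : Linked p ε ε' π₁ π₁') : EndoIso π π₁ ↔ EndoIso π' π₁' :=
  ⟨fun e ↦ (h.symm.trans_endoIso e).symm.endoIso h₁,
    fun e ↦ (h.trans_endoIso e).symm.endoIso h₁.symm⟩

end Linked

section PrimePowerOrder

variable {p m : ℕ} {G : Type*} [Group G]

theorem IsPowEndo.commutator_pow {ε : ℕ} {π : G →* G} (h : IsPowEndo p ε π) (x y : G) :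
    ⁅x, y⁆ ^ p = 1 := by
  have hπ : π ⁅x, y⁆ = 1 := by
    rw [map_commutatorElement, commutatorElement_eq_one_iff_mul_comm]
    exact (Subgroup.mem_center_iff.mp (h.mem_center x) (π y)).symm
  rw [h.pow_eq, hπ, one_pow]

theorem exists_isPowEndo_one [Fact p.Prime] (hG : Nat.card G = p ^ m) (hmp : m ≤ p)
    (hcomm : ∀ x y : G, ⁅x, y⁆ ^ p = 1) : ∃ π : G →* G, IsPowEndo p 1 π := by
  have hmul := mul_pow_of_card_eq_prime_pow hG hmp hcomm
  refine ⟨.mk' (· ^ p) hmul, pow_mem_center_of_mul_pow hmul hcomm, ⟨m, fun x ↦ ?_⟩,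
    fun x ↦ (pow_one (x ^ p)).symm⟩
  change (· ^ p)^[m] x = 1
  rw [pow_iterate, ← hG]
  exact pow_card_eq_one'

theorem iterate_eq_one_of_nilpotent [Fact p.Prime] (hG : Nat.card G = p ^ m) {π : G →* G}
    (hπ : ∃ N, ∀ x, π^[N] x = 1) (x : G) : π^[m] x = 1 := by
  induction m using Nat.strong_induction_on generalizing G with
  | _ m ih =>
    have := finite_of_card_eq_prime_pow hG
    obtain ⟨N, hN⟩ := hπ
    by_cases hsurj : Function.Surjective π
    · obtain ⟨y, rfl⟩ := hsurj.iterate N x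
      rw [hN, iterate_map_one]
    obtain ⟨l, hlm, hl⟩ := exists_card_eq_prime_pow_lt hG π.range.card_subgroup_dvd_card
      fun h ↦ hsurj (MonoidHom.range_eq_top.mp (Subgroup.eq_top_of_card_eq _ h))
    let τ : π.range →* π.range := π.rangeRestrict.comp π.range.subtype
    have hτ (j : ℕ) (a : π.range) : ((τ^[j] a : π.range) : G) = π^[j] a :=
      Function.Semiconj.iterate_right (f := ((↑) : π.range → G)) (fun _ ↦ rfl) j a
    have hl1 : π^[l + 1] x = 1 := by
      rw [Function.iterate_succ_apply, ← hτ l ⟨π x, x, rfl⟩,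
        ih l hlm hl ⟨N, fun a ↦ Subtype.ext ((hτ N a).trans (hN a))⟩]
      rfl
    obtain ⟨j, rfl⟩ := Nat.exists_eq_add_of_le' (Nat.succ_le_of_lt hlm)
    rw [Function.iterate_add_apply, hl1, iterate_map_one]

end PrimePowerOrder

section Counting

theorem mem_autOrbit_iff {E : Type*} [Group E] {φ τ : E →* E} :
    τ ∈ autOrbit E φ ↔ EndoIso φ τ := by
  refine exists_congr fun α ↦ ⟨fun h x ↦ ?_, fun h x ↦ ?_⟩
  · rw [h, α.symm_apply_apply]
  · rw [h, α.apply_symm_apply]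

theorem EndoIso.mem_NSet {n : ℕ} {P P' : Type*} [Group P] [Group P'] {φ : P →* P} {ψ : P' →* P'}
    (h : EndoIso φ ψ) (hφ : φ ∈ NSet n P) : ψ ∈ NSet n P' := by
  obtain ⟨e, he⟩ := h
  refine ⟨e.surjective.forall.mpr fun x ↦ ?_, e.surjective.forall.mpr fun x ↦ ?_⟩
  · rw [← he, Subgroup.mem_center_iff]
    refine e.surjective.forall.mpr fun y ↦ ?_
    rw [← map_mul, ← map_mul, Subgroup.mem_center_iff.mp (hφ.1 x)]
  · rw [← Function.Semiconj.iterate_right (f := e) he n x, hφ.2, map_one]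

theorem card_quot_eq_of_rel {A B : Type*} {r : A → A → Prop} {s : B → B → Prop}
    (hr : Equivalence r) (hs : Equivalence s) (T : A → B → Prop) (hA : ∀ a, ∃ b, T a b)
    (hB : ∀ b, ∃ a, T a b) (hT : ∀ {a b a' b'}, T a b → T a' b' → (r a a' ↔ s b b')) :
    Nat.card (Quot r) = Nat.card (Quot s) := by
  choose F hF using hA
  choose G hG using hB
  exact Nat.card_congr
    { toFun := Quot.map F fun a a' h ↦ (hT (hF a) (hF a')).mp h
      invFun := Quot.map G fun b b' h ↦ (hT (hG b) (hG b')).mpr h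
      left_inv := Quot.ind fun a ↦ Quot.sound ((hT (hG _) (hF a)).mpr (hs.refl _))
      right_inv := Quot.ind fun b ↦ Quot.sound ((hT (hF _) (hG b)).mp (hr.refl _)) }

theorem card_quot_eq_sum {B : Type*} [Fintype B] {s : B → B → Prop} (hs : Equivalence s) :
    (Nat.card (Quot s) : ℚ) = ∑ b, (1 : ℚ) / Nat.card {c // s b c} := by
  classical
  have : Fintype (Quot s) := Fintype.ofFinite _
  have hclass (b : B) : Nat.card {c // s b c} =
      (Finset.univ.filter fun c ↦ Quot.mk s c = Quot.mk s b).card := by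
    simp only [hs.quot_mk_eq_iff, Nat.card_eq_fintype_card, Fintype.card_subtype]
    exact congrArg _ (Finset.filter_congr fun c _ ↦ ⟨hs.symm, hs.symm⟩)
  calc (Nat.card (Quot s) : ℚ) = ∑ _c : Quot s, 1 := by simp
    _ = ∑ c : Quot s, ∑ b with Quot.mk s b = c, (1 : ℚ) / Nat.card {c // s b c} := by
      refine Finset.sum_congr rfl fun c _ ↦ ?_
      obtain ⟨a, rfl⟩ := Quot.exists_rep c
      have hconst : ∀ b ∈ Finset.univ.filter fun b ↦ Quot.mk s b = Quot.mk s a,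
          (1 : ℚ) / Nat.card {c // s b c} = 1 / Nat.card {c // s a c} := fun b hb ↦ by
        rw [hclass, hclass, (Finset.mem_filter.mp hb).2]
      have : Nonempty {c // s a c} := ⟨⟨a, hs.refl a⟩⟩
      rw [Finset.sum_congr rfl hconst, Finset.sum_const, ← hclass, nsmul_eq_mul,
        mul_one_div_cancel (Nat.cast_ne_zero.mpr Nat.card_pos.ne')]
    _ = ∑ b, (1 : ℚ) / Nat.card {c // s b c} := Finset.sum_fiberwise _ _ _

instance {p n : ℕ} (a : GoodGroup p n) : Group a.1.1 := a.1.2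

theorem groupIsoRel_equivalence (p n : ℕ) : Equivalence (groupIsoRel p n) where
  refl a := ⟨MulEquiv.refl a.1.1⟩
  symm := fun ⟨e⟩ ↦ ⟨MulEquiv.symm e⟩
  trans := fun ⟨e⟩ ⟨e'⟩ ↦ ⟨MulEquiv.trans e e'⟩

theorem endoIso_equivalence {B : Type*} {P : B → Type*} [∀ b, Group (P b)]
    (π : ∀ b, P b →* P b) : Equivalence fun b c ↦ EndoIso (π b) (π c) where
  refl _ := ⟨.refl _, fun _ ↦ rfl⟩
  symm := .symm
  trans := fun ⟨e, he⟩ ⟨e', he'⟩ ↦ ⟨e.trans e', fun x ↦ (congrArg e' (he x)).trans (he' _)⟩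

theorem IsPowEndo.endoIso_iff_nonempty_mulEquiv {p : ℕ} {P P' : Type*} [Group P] [Group P']
    {π : P →* P} {π' : P' →* P'} (h : IsPowEndo p 1 π) (h' : IsPowEndo p 1 π') :
    EndoIso π π' ↔ Nonempty (P ≃* P') :=
  ⟨fun ⟨e, _⟩ ↦ ⟨e⟩, fun ⟨e⟩ ↦ ⟨e, fun x ↦ by
    rw [← pow_one (π x), ← h.pow_eq, map_pow, h'.pow_eq, pow_one]⟩⟩

theorem isPowEndo_zero_of_mem_NSet {p n : ℕ} {E : Type*} [Group E] (hexp : ∀ x : E, x ^ p = 1)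
    {φ : E →* E} (hφ : φ ∈ NSet n E) : IsPowEndo p 0 φ where
  mem_center := hφ.1
  nilpotent := ⟨n, hφ.2⟩
  pow_eq x := by rw [hexp, pow_zero]

theorem IsPowEndo.mem_NSet {p ε n : ℕ} [Fact p.Prime] {E : Type*} [Group E]
    (hE : Nat.card E = p ^ n) {φ : E →* E} (h : IsPowEndo p ε φ) : φ ∈ NSet n E :=
  ⟨h.mem_center, iterate_eq_one_of_nilpotent hE h.nilpotent⟩

theorem IsPowEndo.exists_linked_NSet {p n : ℕ} [Fact p.Prime] (hn : 1 ≤ n) {ι : Type*}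
    {E : ι → Type} [∀ i, Group (E i)]
    (hcomplete : ∀ (G : Type) (_ : Group G), Nat.card G = p ^ n → (∀ x : G, x ^ p = 1) →
      Nontrivial G → ∃ i : ι, Nonempty (G ≃* E i))
    {G : Type} [Group G] (hG : Nat.card G = p ^ n) {π : G →* G} (h : IsPowEndo p 1 π) :
    ∃ b : Σ i, NSet n (E i), Linked p 1 0 π b.2.1 := by
  have := finite_of_card_eq_prime_pow hG
  obtain ⟨P, _, σ, hσ⟩ := h.exists_linked le_rfl 0
  have hP : Nat.card P = p ^ n := hσ.card_eq.trans hG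
  obtain ⟨i, ⟨e⟩⟩ := hcomplete P _ hP (fun x ↦ by rw [hσ.isPowEndo.pow_eq, pow_zero])
    (nontrivial_of_card_eq_prime_pow hP (Nat.one_le_iff_ne_zero.mp hn))
  have he : EndoIso σ ((e.toMonoidHom.comp σ).comp e.symm.toMonoidHom) := ⟨e, fun x ↦ by simp⟩
  exact ⟨⟨i, _, he.mem_NSet (hσ.isPowEndo.mem_NSet hP)⟩, hσ.trans_endoIso he⟩

theorem card_quot_groupIsoRel_eq {p n : ℕ} [Fact p.Prime] (hn : 1 ≤ n) (hpn : n ≤ p) {ι : Type*}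
    {E : ι → Type} [∀ i, Group (E i)] (hcard : ∀ i, Nat.card (E i) = p ^ n)
    (hexp : ∀ i, ∀ x : E i, x ^ p = 1)
    (hcomplete : ∀ (G : Type) (_ : Group G), Nat.card G = p ^ n → (∀ x : G, x ^ p = 1) →
      Nontrivial G → ∃ i : ι, Nonempty (G ≃* E i)) :
    Nat.card (Quot (groupIsoRel p n)) =
      Nat.card (Quot fun b c : Σ i, NSet n (E i) ↦ EndoIso b.2.1 c.2.1) := by
  have hfin (i) := finite_of_card_eq_prime_pow (hcard i)
  have hzero (b : Σ i, NSet n (E i)) : IsPowEndo p 0 b.2.1 :=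
    isPowEndo_zero_of_mem_NSet (hexp b.1) b.2.2
  refine card_quot_eq_of_rel (groupIsoRel_equivalence p n)
    (endoIso_equivalence fun b : Σ i, NSet n (E i) ↦ b.2.1)
    (fun a b ↦ ∃ π : a.1.1 →* a.1.1, Linked p 1 0 π b.2.1) ?_ ?_ ?_
  · intro a
    obtain ⟨π, hπ⟩ := exists_isPowEndo_one a.2.1 hpn a.2.2
    obtain ⟨b, hb⟩ := hπ.exists_linked_NSet hn hcomplete a.2.1
    exact ⟨b, π, hb⟩
  · intro b
    obtain ⟨G, _, π, hπ⟩ := (hzero b).exists_linked zero_le_one 1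
    exact ⟨⟨⟨G, _⟩, hπ.card_eq.trans (hcard b.1), hπ.isPowEndo.commutator_pow⟩, π, hπ.symm⟩
  · rintro a b a' b' ⟨π, hπ⟩ ⟨π', hπ'⟩
    have := finite_of_card_eq_prime_pow a'.2.1
    exact (hπ.symm.isPowEndo.endoIso_iff_nonempty_mulEquiv hπ'.symm.isPowEndo).symm.trans
      (hπ.endoIso_iff hπ')

theorem card_endoIso_eq_card_autOrbit {n : ℕ} {ι : Type*} {E : ι → Type*} [∀ i, Group (E i)]
    (htransv : ∀ i j : ι, Nonempty (E i ≃* E j) → i = j) {i : ι} (φ : NSet n (E i)) :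
    Nat.card {c : Σ j, NSet n (E j) // EndoIso φ.1 c.2.1} = Nat.card (autOrbit (E i) φ.1) := by
  refine (Nat.card_eq_of_bijective (fun τ : autOrbit (E i) φ.1 ↦
    ⟨⟨i, τ.1, (mem_autOrbit_iff.mp τ.2).mem_NSet φ.2⟩, mem_autOrbit_iff.mp τ.2⟩) ⟨?_, ?_⟩).symm
  · intro τ τ' h
    simpa [Subtype.ext_iff] using h
  · rintro ⟨⟨j, ψ, hψ⟩, h⟩
    obtain rfl : i = j := htransv i j (h.elim fun e _ ↦ ⟨e⟩)
    exact ⟨⟨ψ, mem_autOrbit_iff.mpr h⟩, rfl⟩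

end Counting

/-- Let `p ≥ n` with `p` prime, and let `E : ι → Type` be a transversal for the isomorphism
classes of groups of order `p ^ n` and exponent `p`.  Then the number of isomorphism classes of
groups of order `p ^ n` whose derived subgroup has exponent dividing `p` equals
`∑_{E} ∑_{φ ∈ N_E} 1 / |φ^{Aut(E)}|`. -/
theorem count_formula (p n : ℕ) (hp : p.Prime) (hn : 1 ≤ n) (hpn : n ≤ p)
    (ι : Type) [Fintype ι] (E : ι → Type) [∀ i, Group (E i)]
    (hcard : ∀ i, Nat.card (E i) = p ^ n)
    (hexp : ∀ i, ∀ x : E i, x ^ p = 1)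
    (hnontriv : ∀ i, Nontrivial (E i))
    (htransv : ∀ i j : ι, Nonempty (E i ≃* E j) → i = j)
    (hcomplete : ∀ (G : Type) (_ : Group G), Nat.card G = p ^ n → (∀ x : G, x ^ p = 1) →
      Nontrivial G → ∃ i : ι, Nonempty (G ≃* E i)) :
    (Nat.card (Quot (groupIsoRel p n)) : ℚ) =
      ∑ i : ι, ∑ᶠ φ ∈ NSet n (E i), (1 : ℚ) / (Nat.card (autOrbit (E i) φ)) := by
  have := Fact.mk hp
  have hfin (i) := finite_of_card_eq_prime_pow (hcard i)
  have (i : ι) : Finite (E i →* E i) := .of_injective _ DFunLike.coe_injective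
  have (i : ι) : Fintype (NSet n (E i)) := .ofFinite _
  rw [card_quot_groupIsoRel_eq hn hpn hcard hexp hcomplete,
    card_quot_eq_sum (endoIso_equivalence fun b : Σ i, NSet n (E i) ↦ b.2.1), Fintype.sum_sigma]
  refine Finset.sum_congr rfl fun i _ ↦ ?_
  rw [← finsum_set_coe_eq_finsum_mem, finsum_eq_sum_of_fintype]
  exact Finset.sum_congr rfl fun φ _ ↦ by rw [card_endoIso_eq_card_autOrbit htransv φ]
end

section
/- Let p be a prime, n a natural number, and K a finite-dimensional Lie algebra over ℤ/pℤ. Let C(K) be the set of (ℤ/pℤ)-linear endomorphisms σ of K such that σ^n = 0, the image of σ is contained in the center Z(K), and σ(⁅x,y⁆) = ⁅σ(x), y⁆ for all x, y ∈ K. The group Aut_{Lie}(K) of Lie algebra automorphisms of K acts on C(K) by conjugation (α·σ = α∘σ∘α⁻¹). Then there is a bijection between the set of orbits of this action and the set of isomorphism classes of Lie algebras L over R_n = (ℤ/pℤ)[X]/(X^n) satisfying T•⁅a,b⁆ = 0 for all a,b ∈ L (T the image of X), whose underlying (ℤ/pℤ)-Lie algebra (obtained by restricting scalars along ℤ/pℤ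 → R_n) is isomorphic to K. Explicitly, σ ∈ C(K) corresponds to the R_n-Lie algebra structure on K in which T acts as σ. -/
/-!
An `R_n`-module structure extending a given `ℤ/pℤ`-structure is the same thing as the action of the
generator `T`, and additive maps commuting with `ℤ/pℤ` and `T` are `R_n`-linear. Hence an `R_n`-Lie
algebra with underlying Lie algebra `K` is a `σ` with `σ ^ n = 0` commuting with every `⁅x, ·⁆`;
the condition `T • ⁅a, b⁆ = 0` then says that both sides of `σ ⁅x, y⁆ = ⁅x, σ y⁆` vanish, which puts
the image of `σ` in the centre. An `R_n`-isomorphism between two such structures is a Lie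
automorphism of `K` intertwining the two endomorphisms.
-/

set_option synthInstance.maxHeartbeats 1000000

open Polynomial

/-- The ring `R_n = (ℤ/pℤ)[X]/(Xⁿ)`. -/
noncomputable abbrev Rn (p n : ℕ) : Type :=
  Polynomial (ZMod p) ⧸ Ideal.span {(X : Polynomial (ZMod p)) ^ n}

/-- `T`, the image of `X` in `R_n`. -/
noncomputable def Tn (p n : ℕ) : Rn p n := Ideal.Quotient.mk _ X

/-- The set `C(K)` of `ℤ/pℤ`-linear endomorphisms `σ` of `K` with `σ ^ n = 0`, image contained
in the centre `Z(K)`, and `σ⁅x, y⁆ = ⁅σ x, y⁆`. -/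
def CSet (p n : ℕ) (K : Type) [LieRing K] [LieAlgebra (ZMod p) K] :
    Set (Module.End (ZMod p) K) :=
  {σ | σ ^ n = 0 ∧ (∀ x : K, σ x ∈ LieAlgebra.center (ZMod p) K) ∧
    ∀ x y : K, σ ⁅x, y⁆ = ⁅σ x, y⁆}

/-- Conjugation of elements of `C(K)` by Lie algebra automorphisms of `K`:
`σ₁ ∼ σ₂` iff `σ₂ = α ∘ σ₁ ∘ α⁻¹` for some `α ∈ Aut_Lie(K)`. -/
def conjRel (p n : ℕ) (K : Type) [LieRing K] [LieAlgebra (ZMod p) K]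
    (σ₁ σ₂ : CSet p n K) : Prop :=
  ∃ α : K ≃ₗ⁅ZMod p⁆ K, ∀ x : K, α (σ₁.1 x) = σ₂.1 (α x)

/-- Bundled `R_n`-Lie algebras `L` with `T • ⁅a, b⁆ = 0` whose underlying `ℤ/pℤ`-Lie algebra
(obtained by restricting scalars along `ℤ/pℤ → R_n`) is isomorphic to `K`. -/
def GoodLieOver (p n : ℕ) (K : Type) [LieRing K] [LieAlgebra (ZMod p) K] : Type 1 :=
  { q : Σ (L : Type) (lr : LieRing L), @LieAlgebra (Rn p n) L _ lr //
      letI := q.2.1; letI := q.2.2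
      (∀ a b : q.1, Tn p n • ⁅a, b⁆ = 0) ∧
      ∃ e : q.1 ≃ K, (∀ a b : q.1, e (a + b) = e a + e b) ∧
        (∀ a b : q.1, e ⁅a, b⁆ = ⁅e a, e b⁆) ∧
        ∀ (c : ZMod p) (a : q.1), e ((algebraMap (ZMod p) (Rn p n) c) • a) = c • e a }

/-- `R_n`-linear Lie algebra isomorphism between two bundled `R_n`-Lie algebras. -/
def lieIsoRel (p n : ℕ) (K : Type) [LieRing K] [LieAlgebra (ZMod p) K]
    (q₁ q₂ : GoodLieOver p n K) : Prop :=
  letI := q₁.1.2.1; letI := q₁.1.2.2; letI := q₂.1.2.1; letI := q₂.1.2.2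
  Nonempty (q₁.1.1 ≃ₗ⁅Rn p n⁆ q₂.1.1)

section Adjoin

variable {R A : Type*}

theorem map_smul_of_adjoin_eq_top [CommSemiring R] [Semiring A] [Algebra R A] {M N : Type*}
    [AddCommMonoid M] [AddCommMonoid N] [Module R M] [Module R N] [Module A M] [Module A N]
    [IsScalarTower R A M] [IsScalarTower R A N] {s : Set A} (hs : Algebra.adjoin R s = ⊤)
    (g : M →ₗ[R] N) (hg : ∀ a ∈ s, ∀ x, g (a • x) = a • g x) (a : A) (x : M) :
    g (a • x) = a • g x := by
  have ha : a ∈ Algebra.adjoin R s := hs ▸ Algebra.mem_top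
  induction ha using Algebra.adjoin_induction generalizing x with
  | mem a ha => exact hg a ha x
  | algebraMap r => simp only [algebraMap_smul, map_smul]
  | add a b _ _ iha ihb => simp only [add_smul, map_add, iha, ihb]
  | mul a b _ _ iha ihb => simp only [mul_smul, iha, ihb]

theorem adjoin_quotient_mk_X_eq_top [CommRing R] (I : Ideal R[X]) :
    Algebra.adjoin R {Ideal.Quotient.mk I X} = ⊤ := by
  have h := AlgHom.map_adjoin_singleton (Ideal.Quotient.mkₐ R I) X
  rw [Polynomial.adjoin_X, Algebra.map_top,
    (AlgHom.range_eq_top _).2 (Ideal.Quotient.mkₐ_surjective R I)] at h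
  exact h.symm

variable [CommRing R] [CommRing A] [Algebra R A] {L L' : Type*} [LieRing L] [LieRing L']
  [LieAlgebra R L] [LieAlgebra R L']

theorem nonempty_lieEquiv_iff_of_adjoin_eq_top [LieAlgebra A L] [LieAlgebra A L']
    [IsScalarTower R A L] [IsScalarTower R A L'] {s : Set A} (hs : Algebra.adjoin R s = ⊤) :
    Nonempty (L ≃ₗ⁅A⁆ L') ↔ ∃ e : L ≃ₗ⁅R⁆ L', ∀ a ∈ s, ∀ x, e (a • x) = a • e x := by
  constructor
  · rintro ⟨e⟩
    exact ⟨{ e.toLinearEquiv.restrictScalars R with map_lie' := e.map_lie _ _ },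
      fun a _ => map_smul e.toLinearEquiv a⟩
  · rintro ⟨e, he⟩
    exact ⟨{ e with map_smul' := map_smul_of_adjoin_eq_top hs e.toLinearEquiv.toLinearMap he }⟩

/-- The `A`-Lie algebra structure on an `R`-Lie algebra given by an action `φ` of `A`, a generating
set of which acts through the centroid. The underlying module structure is `Module.compHom`. -/
abbrev lieAlgebraOfAlgHom {s : Set A} (hs : Algebra.adjoin R s = ⊤) (φ : A →ₐ[R] Module.End R L)
    (hφ : ∀ a ∈ s, ∀ x y : L, ⁅x, φ a y⁆ = φ a ⁅x, y⁆) : LieAlgebra A L :=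
  letI := Module.compHom L φ.toRingHom
  haveI : IsScalarTower R A L :=
    .of_algebraMap_smul fun r x => DFunLike.congr_fun (φ.commutes r) x
  { lie_smul a x := map_smul_of_adjoin_eq_top hs (LieModule.toEnd R L L x) (hφ · · x) a }

end Adjoin

variable {p n : ℕ}

theorem adjoin_Tn_eq_top : Algebra.adjoin (ZMod p) {Tn p n} = ⊤ :=
  adjoin_quotient_mk_X_eq_top _

theorem Tn_pow_eq_zero : Tn p n ^ n = 0 := by
  rw [Tn, ← map_pow, Ideal.Quotient.eq_zero_iff_mem]
  exact Ideal.mem_span_singleton_self _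

variable {K : Type} [LieRing K] [LieAlgebra (ZMod p) K]

namespace CSet

theorem mem_iff {σ : Module.End (ZMod p) K} :
    σ ∈ CSet p n K ↔ σ ^ n = 0 ∧ (∀ x y : K, ⁅x, σ y⁆ = 0) ∧ ∀ x y : K, σ ⁅x, y⁆ = 0 := by
  have skew (h : ∀ x y : K, ⁅x, σ y⁆ = 0) (x y : K) : ⁅σ x, y⁆ = 0 := by
    rw [← lie_skew, h, neg_zero]
  constructor
  · rintro ⟨hpow, hcenter, hlie⟩
    have hσ (x y : K) : ⁅x, σ y⁆ = 0 := hcenter y x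
    exact ⟨hpow, hσ, fun x y => (hlie x y).trans (skew hσ x y)⟩
  · rintro ⟨hpow, hσ, hlie⟩
    exact ⟨hpow, fun y x => hσ x y, fun x y => (hlie x y).trans (skew hσ x y).symm⟩

theorem lie_apply (σ : CSet p n K) (x y : K) : ⁅x, σ.1 y⁆ = 0 :=
  (mem_iff.1 σ.2).2.1 x y

theorem apply_lie (σ : CSet p n K) (x y : K) : σ.1 ⁅x, y⁆ = 0 :=
  (mem_iff.1 σ.2).2.2 x y

/-- The action of `R_n` on `K` in which `T` acts as `σ`. -/
noncomputable def algHom (σ : CSet p n K) : Rn p n →ₐ[ZMod p] Module.End (ZMod p) K :=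
  Ideal.Quotient.liftₐ _ (aeval σ.1) fun f hf => by
    obtain ⟨g, rfl⟩ := Ideal.mem_span_singleton.1 hf
    rw [map_mul, map_pow, aeval_X, σ.2.1, zero_mul]

theorem algHom_Tn (σ : CSet p n K) : algHom σ (Tn p n) = σ.1 :=
  aeval_X σ.1

/-- The Lie algebra `K` regarded as an `R_n`-Lie algebra in which `T` acts as `σ`. It is a synonym
of `K`, so that structures coming from different `σ` are not confused. -/
def Twist (_ : CSet p n K) : Type := K

namespace Twist

variable (σ : CSet p n K)

instance : LieRing (Twist σ) := inferInstanceAs (LieRing K)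

instance : LieAlgebra (ZMod p) (Twist σ) := inferInstanceAs (LieAlgebra (ZMod p) K)

noncomputable instance : LieAlgebra (Rn p n) (Twist σ) :=
  lieAlgebraOfAlgHom (L := K) adjoin_Tn_eq_top (algHom σ) <| by
    rintro _ rfl x y
    rw [algHom_Tn, lie_apply, apply_lie]

instance : IsScalarTower (ZMod p) (Rn p n) (Twist σ) :=
  .of_algebraMap_smul (A := Rn p n) fun c x => DFunLike.congr_fun ((algHom σ).commutes c) x

/-- The identity map from `K` to its twist. -/
def of : K ≃ₗ⁅ZMod p⁆ Twist σ := LieEquiv.refl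

theorem Tn_smul_of (x : K) : Tn p n • of σ x = of σ (σ.1 x) :=
  DFunLike.congr_fun (algHom_Tn σ) x

theorem Tn_smul_lie (a b : Twist σ) : Tn p n • ⁅a, b⁆ = 0 := by
  obtain ⟨x, rfl⟩ : ∃ x, of σ x = a := (of σ).surjective a
  obtain ⟨y, rfl⟩ : ∃ y, of σ y = b := (of σ).surjective b
  rw [← LieEquiv.map_lie, Tn_smul_of, apply_lie, map_zero]

end Twist

theorem nonempty_twist_lieEquiv_iff {σ τ : CSet p n K} :
    Nonempty (Twist σ ≃ₗ⁅Rn p n⁆ Twist τ) ↔ conjRel p n K σ τ := by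
  refine (nonempty_lieEquiv_iff_of_adjoin_eq_top adjoin_Tn_eq_top).trans ⟨?_, ?_⟩
  · rintro ⟨e, he⟩
    let α : K ≃ₗ⁅ZMod p⁆ K := ((Twist.of σ).trans e).trans (Twist.of τ).symm
    have hα (x : K) : Twist.of τ (α x) = e (Twist.of σ x) := (Twist.of τ).apply_symm_apply _
    refine ⟨α, fun x => (Twist.of τ).injective ?_⟩
    change Twist.of τ (α (σ.1 x)) = Twist.of τ (τ.1 (α x))
    rw [hα, ← Twist.Tn_smul_of, ← Twist.Tn_smul_of, hα, he _ rfl]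
  · rintro ⟨α, hα⟩
    refine ⟨((Twist.of σ).symm.trans α).trans (Twist.of τ), ?_⟩
    rintro _ rfl a
    obtain ⟨x, rfl⟩ : ∃ x, Twist.of σ x = a := (Twist.of σ).surjective a
    rw [Twist.Tn_smul_of]
    simp only [LieEquiv.trans_apply, LieEquiv.symm_apply_apply, Twist.Tn_smul_of, hα]

section Transport

variable {L : Type*} [LieRing L] [LieAlgebra (ZMod p) L] [LieAlgebra (Rn p n) L]
  [IsScalarTower (ZMod p) (Rn p n) L] (e : L ≃ₗ⁅ZMod p⁆ K)
  (hT : ∀ a b : L, Tn p n • ⁅a, b⁆ = 0)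

/-- The action of `T` on `L`, transported to `K`. -/
noncomputable def ofLieEquiv : CSet p n K where
  val := e.toLinearEquiv.conjAlgEquiv (ZMod p) (Algebra.lsmul (ZMod p) (ZMod p) L (Tn p n))
  property := by
    refine mem_iff.2 ⟨?_, fun x y => ?_, fun x y => ?_⟩
    · rw [← map_pow, ← map_pow, Tn_pow_eq_zero, map_zero, map_zero]
    · change ⁅x, e (Tn p n • e.symm y)⁆ = 0
      rw [← e.apply_symm_apply x, ← LieEquiv.map_lie, lie_smul, hT, map_zero]
    · change e (Tn p n • e.symm ⁅x, y⁆) = 0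
      rw [LieEquiv.map_lie, hT, map_zero]

theorem ofLieEquiv_apply (a : L) : (ofLieEquiv e hT).1 (e a) = e (Tn p n • a) :=
  congrArg (fun b => e (Tn p n • b)) (e.symm_apply_apply a)

theorem nonempty_lieEquiv_twist_ofLieEquiv :
    Nonempty (L ≃ₗ⁅Rn p n⁆ Twist (ofLieEquiv e hT)) := by
  refine (nonempty_lieEquiv_iff_of_adjoin_eq_top adjoin_Tn_eq_top).2
    ⟨e.trans (Twist.of _), ?_⟩
  rintro _ rfl a
  rw [LieEquiv.trans_apply, LieEquiv.trans_apply, Twist.Tn_smul_of, ofLieEquiv_apply]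

end Transport

end CSet

namespace GoodLieOver

/-- Bundling of an `R_n`-Lie algebra whose restriction of scalars is given as a compatible
`ℤ/pℤ`-Lie algebra structure. -/
def mk (L : Type) [LieRing L] [LieAlgebra (ZMod p) L] [LieAlgebra (Rn p n) L]
    [IsScalarTower (ZMod p) (Rn p n) L] (e : L ≃ₗ⁅ZMod p⁆ K)
    (hT : ∀ a b : L, Tn p n • ⁅a, b⁆ = 0) : GoodLieOver p n K :=
  ⟨⟨L, inferInstance, inferInstance⟩, hT, e.toLinearEquiv.toEquiv, map_add e.toLinearEquiv,
    LieEquiv.map_lie e, fun c a =>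
      (congrArg e (algebraMap_smul (Rn p n) c a)).trans (map_smul e.toLinearEquiv c a)⟩

theorem exists_eq_mk (q : GoodLieOver p n K) :
    ∃ (L : Type) (_ : LieRing L) (_ : LieAlgebra (ZMod p) L) (_ : LieAlgebra (Rn p n) L)
      (_ : IsScalarTower (ZMod p) (Rn p n) L) (e : L ≃ₗ⁅ZMod p⁆ K)
      (hT : ∀ a b : L, Tn p n • ⁅a, b⁆ = 0), q = mk L e hT := by
  obtain ⟨⟨L, _, _⟩, hT, e, hadd, hlie, hsmul⟩ := q
  let _ : LieAlgebra (ZMod p) L :=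
    inferInstanceAs (LieAlgebra (ZMod p) (RestrictScalars (ZMod p) (Rn p n) L))
  have : IsScalarTower (ZMod p) (Rn p n) L :=
    .of_algebraMap_smul (A := Rn p n) fun _ _ => rfl
  exact ⟨L, _, _, _, this,
    { e with map_add' := hadd, map_smul' := hsmul, map_lie' := hlie _ _ }, hT, rfl⟩

end GoodLieOver

theorem lieIsoRel_equivalence : Equivalence (lieIsoRel p n K) where
  refl q :=
    letI := q.1.2.1; letI := q.1.2.2
    ⟨LieEquiv.refl⟩
  symm {q r} := fun ⟨e⟩ =>
    letI := q.1.2.1; letI := q.1.2.2; letI := r.1.2.1; letI := r.1.2.2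
    ⟨e.symm⟩
  trans {q r s} := fun ⟨e⟩ ⟨f⟩ =>
    letI := q.1.2.1; letI := q.1.2.2; letI := r.1.2.1; letI := r.1.2.2
    letI := s.1.2.1; letI := s.1.2.2
    ⟨e.trans f⟩

namespace CSet

/-- The bundled `R_n`-Lie algebra structure on `K` in which `T` acts as `σ`. -/
noncomputable def toGoodLieOver (σ : CSet p n K) : GoodLieOver p n K :=
  .mk (Twist σ) (Twist.of σ).symm (Twist.Tn_smul_lie σ)

theorem lieIsoRel_toGoodLieOver_iff {σ τ : CSet p n K} :
    lieIsoRel p n K (toGoodLieOver σ) (toGoodLieOver τ) ↔ conjRel p n K σ τ :=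
  nonempty_twist_lieEquiv_iff (σ := σ) (τ := τ)

theorem exists_lieIsoRel_toGoodLieOver (q : GoodLieOver p n K) :
    ∃ σ : CSet p n K, lieIsoRel p n K q (toGoodLieOver σ) := by
  obtain ⟨L, _, _, _, _, e, hT, rfl⟩ := q.exists_eq_mk
  exact ⟨ofLieEquiv e hT, nonempty_lieEquiv_twist_ofLieEquiv e hT⟩

end CSet

theorem orbit_structure_correspondence_general (p n : ℕ)
    (K : Type) [LieRing K] [LieAlgebra (ZMod p) K] :
    ∃ Φ : Quot (conjRel p n K) ≃ Quot (lieIsoRel p n K),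
      ∀ σ, Φ (Quot.mk _ σ) = Quot.mk _ (CSet.toGoodLieOver σ) := by
  let Φ : Quot (conjRel p n K) → Quot (lieIsoRel p n K) :=
    Quot.map CSet.toGoodLieOver fun _ _ => CSet.lieIsoRel_toGoodLieOver_iff.2
  have injective : Function.Injective Φ := by
    rintro ⟨σ⟩ ⟨τ⟩ h
    exact Quot.sound <| CSet.lieIsoRel_toGoodLieOver_iff.1 <|
      (lieIsoRel_equivalence.quot_mk_eq_iff _ _).1 h
  have surjective : Function.Surjective Φ := by
    rintro ⟨q⟩
    obtain ⟨σ, hσ⟩ := CSet.exists_lieIsoRel_toGoodLieOver q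
    exact ⟨Quot.mk _ σ, (Quot.sound hσ).symm⟩
  exact ⟨.ofBijective Φ ⟨injective, surjective⟩, fun _ => rfl⟩

/-- For a finite-dimensional `ℤ/pℤ`-Lie algebra `K`, there is a bijection between the orbits of
the conjugation action of `Aut_Lie(K)` on `C(K)` and the isomorphism classes of `R_n`-Lie
algebras `L` with `T • ⁅a, b⁆ = 0` whose underlying `ℤ/pℤ`-Lie algebra is isomorphic to `K`. -/
theorem orbit_structure_correspondence (p n : ℕ) (hp : p.Prime)
    (K : Type) [LieRing K] [LieAlgebra (ZMod p) K] [Module.Finite (ZMod p) K] :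
    Nonempty (Quot (conjRel p n K) ≃ Quot (lieIsoRel p n K)) :=
  let ⟨Φ, _⟩ := orbit_structure_correspondence_general p n K
  ⟨Φ⟩
end
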